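/- arXiv:1012.1946 — 5 statements merged into one kernel-verified Lean document; each statement's English description precedes it below -/
import Mathlib

section
/- For any r_1, r_2 > 0 with r_1 ≠ r_2, Bajnok's configuration X = {b_{kj} = (r_k cos((2j+k)π/5), r_k sin((2j+k)π/5)) : 1 ≤ j ≤ 5, k = 1, 2} ⊆ ℝ², with weight w(b_{kj}) = r_k^{−5}, is a tight Euclidean 6-design in ℝ² supported by two concentric spheres; in particular |X| = 10 = dim Pol_3(ℝ²). -/
/-!
After identifying `ℝ²` with `ℂ`, a polynomial of degree at most `6` is a combination of the functions
`z ^ a * conj z ^ b` with `a + b ≤ 6` (`poly_mem`), so the design property has to be checked on these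
only. The average over a circle of radius `r` is `r ^ (2 * a)` if `a = b` and `0` otherwise
(`average_monomial`): rotation invariance of the Hausdorff measure gives the vanishing, and the
constant case needs the length of the circle to be finite and nonzero. Each layer of the configuration
is a regular pentagon, whose sum of `z ^ a * conj z ^ b` vanishes unless `5 ∣ a - b`. Hence both sides
agree on each layer except for `z ^ 5` and `conj z ^ 5`. There the layers contribute `-5 * r₁ ^ 5` and
`5 * r₂ ^ 5`, which cancel after multiplication by the weights `r_k ^ (-5)` (`monomial_identity`).

For the dimension, a cubic vanishing on two concentric circles has four roots on every line through
the origin, hence is zero (`eq_zero_of_vanish`). So restriction of cubics to the support is injective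
and the dimension is the number `10` of monomials of degree at most `3` (`dimPolOn_cubics`).
-/

open MeasureTheory Metric Finset
open scoped Classical RealInnerProductSpace

noncomputable section

/-- Euclidean `n`-space `ℝⁿ`. -/
abbrev Euc (n : ℕ) := EuclideanSpace ℝ (Fin n)

/-- Evaluation of a multivariate polynomial at a point of `ℝⁿ`. -/
def evalPt {n : ℕ} (x : Euc n) (p : MvPolynomial (Fin n) ℝ) : ℝ :=
  MvPolynomial.eval (fun i => x i) p

/-- The normalized average (with respect to the `O(n)`-invariant surface measure,
i.e. the `(n-1)`-dimensional Hausdorff measure) of `f` over the sphere of radius `r`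
centered at the origin; for `r = 0` it is `f 0`. -/
def sphAvg (n : ℕ) (r : ℝ) (f : Euc n → ℝ) : ℝ :=
  if r = 0 then f 0
  else ⨍ y in Metric.sphere (0 : Euc n) r, f y ∂(μH[(n : ℝ) - 1])

/-- `(X, w)` is a Euclidean `t`-design in `ℝⁿ`:
`∑ᵢ (w(Xᵢ)/|Sᵢ|) ∫_{Sᵢ} f dσᵢ = ∑_{x ∈ X} w(x) f(x)` for all polynomials `f` of
degree at most `t`, where the `Sᵢ` are the concentric spheres supporting `X`. -/
def IsEuclideanDesign (n t : ℕ) (X : Finset (Euc n)) (w : Euc n → ℝ) : Prop :=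
  ∀ p : MvPolynomial (Fin n) ℝ, p.totalDegree ≤ t →
    ∑ r ∈ X.image (fun x => ‖x‖),
        (∑ x ∈ X.filter (fun x => ‖x‖ = r), w x) * sphAvg n r (fun y => evalPt y p)
      = ∑ x ∈ X, w x * evalPt x p

/-- Restriction of polynomials to a subset `S ⊆ ℝⁿ`, as a linear map. -/
def polyRestrict (n : ℕ) (S : Set (Euc n)) :
    MvPolynomial (Fin n) ℝ →ₗ[ℝ] (S → ℝ) where
  toFun p := fun x => evalPt (x : Euc n) p
  map_add' p q := by funext x; simp [evalPt]
  map_smul' c p := by funext x; simp [evalPt, MvPolynomial.smul_eval]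

/-- `Pol_e(S)`: the space of restrictions to `S` of polynomials of total degree at most `e`. -/
def PolOn (n e : ℕ) (S : Set (Euc n)) : Submodule ℝ (S → ℝ) :=
  (MvPolynomial.restrictTotalDegree (Fin n) ℝ e).map (polyRestrict n S)

/-- `dim Pol_e(S)`. -/
def dimPolOn (n e : ℕ) (S : Set (Euc n)) : ℕ := Module.finrank ℝ (PolOn n e S)

/-- The union of the concentric spheres (centered at the origin) supporting `X`. -/
def suppSpheres (n : ℕ) (X : Finset (Euc n)) : Set (Euc n) :=
  ⋃ r ∈ X.image (fun x => ‖x‖), Metric.sphere (0 : Euc n) r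

/-- `(X, w)` is a tight Euclidean `2e`-design on `S` (the union of the concentric
spheres supporting `X`): it is a Euclidean `2e`-design with `|X| = dim Pol_e(S)`. -/
def IsTightOnS (n e : ℕ) (X : Finset (Euc n)) (w : Euc n → ℝ) : Prop :=
  IsEuclideanDesign n (2 * e) X w ∧ X.card = dimPolOn n e (suppSpheres n X)

/-- `(X, w)` is a tight Euclidean `2e`-design: tight on `S` and moreover
`dim Pol_e(S) = dim Pol_e(ℝⁿ) = C(n+e, e)`. -/
def IsTightDesign (n e : ℕ) (X : Finset (Euc n)) (w : Euc n → ℝ) : Prop :=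
  IsTightOnS n e X w ∧ dimPolOn n e (suppSpheres n X) = (n + e).choose e

/-- The point `b_{kj} = (r cos((2j+k)π/5), r sin((2j+k)π/5))` of Bajnok's configuration. -/
def bajnokPt (r : ℝ) (k j : ℕ) : Euc 2 :=
  (WithLp.equiv 2 (Fin 2 → ℝ)).symm
    ![r * Real.cos ((2 * j + k) * Real.pi / 5), r * Real.sin ((2 * j + k) * Real.pi / 5)]

namespace Bajnok

open Complex

/-! ### Arc length and averages on circles -/

/-- The linear isometry `ℂ ≃ ℝ²`, `z ↦ (re z, im z)`, through which points and averages are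
transported to the complex plane. -/
def ident : ℂ ≃ₗᵢ[ℝ] Euc 2 := Complex.orthonormalBasisOneI.repr

lemma ident_zero (z : ℂ) : ident z 0 = z.re := by simp [ident]
lemma ident_one (z : ℂ) : ident z 1 = z.im := by simp [ident]

/-- Arc length on the circle `|z| = r`, as the restricted one-dimensional Hausdorff measure. -/
def circleMeasure (r : ℝ) : Measure ℂ := (μH[1] : Measure ℂ).restrict (sphere 0 r)

/-- The circle is a Lipschitz image of a bounded interval, so its length is finite. -/
instance (r : ℝ) : IsFiniteMeasure (circleMeasure r) := by
  refine ⟨?_⟩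
  rw [circleMeasure, Measure.restrict_apply_univ]
  have h := (lipschitzWith_circleMap 0 r).hausdorffMeasure_image_le (d := 1) zero_le_one
    (Set.Ioc 0 (2 * Real.pi))
  rw [image_circleMap_Ioc, hausdorffMeasure_real] at h
  by_cases hr : 0 ≤ r
  · rw [abs_of_nonneg hr] at h
    refine h.trans_lt ?_
    rw [Real.volume_Ioc]
    exact ENNReal.mul_lt_top (by simp) ENNReal.ofReal_lt_top
  · rw [sphere_eq_empty_of_neg (not_le.mp hr)]
    simp

/-- The circle has positive length, since its projection to the real axis, which is
1-Lipschitz, covers `[-r, r]`. Without this the average of a constant would be `0`. -/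
lemma circleMeasure_ne_zero {r : ℝ} (hr : 0 < r) : circleMeasure r ≠ 0 := by
  rw [circleMeasure, Ne, Measure.restrict_eq_zero]
  intro h0
  have hlip : LipschitzWith 1 Complex.re := by
    have h := reCLM.lipschitz
    rw [reCLM_nnnorm] at h
    exact h
  have h := hlip.hausdorffMeasure_image_le (d := 1) zero_le_one (sphere 0 r)
  rw [h0, hausdorffMeasure_real, mul_zero] at h
  have hsub : Set.Icc (-r) r ⊆ Complex.re '' sphere 0 r := by
    rintro x ⟨hx1, hx2⟩
    refine ⟨⟨x, √(r ^ 2 - x ^ 2)⟩, ?_, rfl⟩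
    rw [mem_sphere_zero_iff_norm, Complex.norm_def, Complex.normSq_mk,
      Real.mul_self_sqrt (by nlinarith), show x * x + (r ^ 2 - x ^ 2) = r ^ 2 by ring,
      Real.sqrt_sq hr.le]
  have h2 := (measure_mono hsub).trans h
  rw [Real.volume_Icc] at h2
  have := ENNReal.ofReal_eq_zero.mp (le_antisymm h2 zero_le)
  linarith

lemma integrable_circleMeasure {f : ℂ → ℂ} (hf : Continuous f) (r : ℝ) :
    Integrable f (circleMeasure r) := by
  have := (inferInstance : IsFiniteMeasure (circleMeasure r))
  obtain ⟨C, hC⟩ := (isCompact_sphere (0 : ℂ) r).exists_bound_of_continuousOn hf.continuousOn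
  refine Integrable.of_bound hf.aestronglyMeasurable C ?_
  exact (ae_restrict_iff' isClosed_sphere.measurableSet).mpr (Filter.Eventually.of_forall hC)

lemma integral_rotate (r : ℝ) (c : Circle) (f : ℂ → ℂ) :
    ∫ z, f (c * z) ∂circleMeasure r = ∫ z, f z ∂circleMeasure r := by
  have hp := (rotation c).toIsometryEquiv.measurePreserving_hausdorffMeasure 1
  have he := (rotation c).toHomeomorph.measurableEmbedding
  have := hp.setIntegral_preimage_emb he f (sphere 0 r)
  have hs : (rotation c).toIsometryEquiv ⁻¹' sphere 0 r = sphere (0 : ℂ) r := by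
    ext z
    rw [Set.mem_preimage, mem_sphere_zero_iff_norm, mem_sphere_zero_iff_norm]
    exact iff_of_eq (congrArg (· = r) ((rotation c).norm_map z))
  rw [hs] at this
  simpa [circleMeasure] using this

lemma sphAvg_eq {r : ℝ} (hr : 0 < r) (f : Euc 2 → ℝ) :
    ((sphAvg 2 r f : ℝ) : ℂ) = ⨍ z, (f (ident z) : ℂ) ∂circleMeasure r := by
  have h1 : (((2 : ℕ) : ℝ) - 1) = 1 := by norm_num
  have hp := ident.toIsometryEquiv.measurePreserving_hausdorffMeasure 1
  have he := ident.toHomeomorph.measurableEmbedding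
  have hs : ident.toIsometryEquiv ⁻¹' sphere 0 r = sphere (0 : ℂ) r := by
    ext z; simp
  have hi := hp.setIntegral_preimage_emb he f (sphere 0 r)
  have hm := hp.measure_preimage_emb he (sphere 0 r)
  rw [hs] at hi hm
  rw [sphAvg, if_neg hr.ne', h1, setAverage_eq, ← hi, average_eq, integral_complex_ofReal]
  simp [circleMeasure, Measure.real, hm]

/-- Orthogonality of characters on a circle: for `a ≠ b`, rotation by `π / (a - b)` changes the
sign of `z ^ a * conj z ^ b`, so its integral vanishes; for `a = b` the function is constant on the
circle. -/
lemma average_monomial {r : ℝ} (hr : 0 < r) (a b : ℕ) :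
    ⨍ z, z ^ a * (starRingEnd ℂ) z ^ b ∂circleMeasure r =
      if a = b then (r : ℂ) ^ (2 * a) else 0 := by
  split_ifs with hab
  · subst hab
    have : (fun z : ℂ => z ^ a * (starRingEnd ℂ) z ^ a) =ᵐ[circleMeasure r]
        fun _ => (r : ℂ) ^ (2 * a) := by
      refine (ae_restrict_iff' isClosed_sphere.measurableSet).mpr (Filter.Eventually.of_forall ?_)
      intro z hz
      rw [mem_sphere_zero_iff_norm] at hz
      simp only
      rw [← mul_pow, Complex.mul_conj, Complex.normSq_eq_norm_sq, hz, pow_mul]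
      push_cast; rfl
    rw [average_congr this]
    have : NeZero (circleMeasure r) := ⟨circleMeasure_ne_zero hr⟩
    exact average_const _ _
  · set t : ℝ := Real.pi / ((a : ℝ) - b)
    have hne : (a : ℝ) - b ≠ 0 := sub_ne_zero.mpr (by exact_mod_cast hab)
    have hc : (Circle.exp t : ℂ) ^ a * (starRingEnd ℂ) (Circle.exp t : ℂ) ^ b = -1 := by
      rw [Circle.coe_exp, ← Complex.exp_conj, ← Complex.exp_nat_mul, ← Complex.exp_nat_mul,
        ← Complex.exp_add, ← Complex.exp_pi_mul_I]
      congr 1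
      have : (Real.pi : ℂ) = t * ((a : ℂ) - b) := by
        have : Real.pi = t * ((a : ℝ) - b) := by simp only [t]; field_simp
        exact_mod_cast congrArg (Complex.ofReal) this
      rw [this]
      simp
      ring
    have h := integral_rotate r (Circle.exp t) (fun z => z ^ a * (starRingEnd ℂ) z ^ b)
    have h' : ∀ z : ℂ, ((Circle.exp t : ℂ) * z) ^ a *
        (starRingEnd ℂ) ((Circle.exp t : ℂ) * z) ^ b = -(z ^ a * (starRingEnd ℂ) z ^ b) := by
      intro z
      rw [map_mul, mul_pow, mul_pow]
      linear_combination (z ^ a * (starRingEnd ℂ) z ^ b) * hc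
    simp only [h'] at h
    rw [integral_neg] at h
    rw [average_eq, CharZero.neg_eq_self_iff.mp h, smul_zero]

/-! ### The configuration in the complex plane -/

/-- The tenth root of unity `exp (π i / 5)`. -/
def zeta : ℂ := Complex.exp (Real.pi * I / 5)

/-- The point `b_{kj}` of the configuration as a complex number, `r * ζ ^ (2 j + k)`. -/
def pt (r : ℝ) (k j : ℕ) : ℂ := r * zeta ^ (2 * j + k)

lemma ident_pt (r : ℝ) (k j : ℕ) : ident (pt r k j) = bajnokPt r k j := by
  have h : pt r k j = r * Complex.exp (((2 * j + k) * Real.pi / 5 : ℝ) * I) := by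
    rw [pt, zeta, ← Complex.exp_nat_mul]
    congr 2
    push_cast; ring
  ext i
  fin_cases i
  · simp only [Fin.zero_eta, ident_zero]
    rw [h, Complex.re_ofReal_mul, Complex.exp_ofReal_mul_I_re]; rfl
  · simp only [Fin.mk_one, ident_one]
    rw [h, Complex.im_ofReal_mul, Complex.exp_ofReal_mul_I_im]; rfl

lemma zeta_pow_five : zeta ^ 5 = -1 := by
  rw [zeta, ← Complex.exp_nat_mul, ← Complex.exp_pi_mul_I]; congr 1; push_cast; ring

lemma zeta_primitive : IsPrimitiveRoot (zeta ^ 2) 5 := by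
  have := Complex.isPrimitiveRoot_exp 5 (by norm_num)
  convert this using 1
  rw [zeta, ← Complex.exp_nat_mul]; congr 1; push_cast; ring

lemma norm_zeta : ‖zeta‖ = 1 := by
  have : zeta = Complex.exp ((Real.pi / 5 : ℝ) * I) := by
    rw [zeta]; congr 1; push_cast; ring
  rw [this, Complex.norm_exp_ofReal_mul_I]

lemma conj_zeta : (starRingEnd ℂ) zeta = zeta ^ 9 := by
  have h0 : zeta ≠ 0 := Complex.exp_ne_zero _
  have h1 : zeta * (starRingEnd ℂ) zeta = 1 := by
    rw [Complex.mul_conj, Complex.normSq_eq_norm_sq, norm_zeta]; simp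
  apply mul_left_cancel₀ h0
  rw [h1]
  linear_combination (1 - zeta ^ 5) * zeta_pow_five

lemma norm_pt {r : ℝ} (hr : 0 < r) (k j : ℕ) : ‖pt r k j‖ = r := by
  simp [pt, norm_zeta, abs_of_pos hr]

lemma pt_injOn {r : ℝ} (hr : 0 < r) (k : ℕ) : Set.InjOn (pt r k) (Finset.Icc 1 5) := by
  intro i hi j hj h
  have h0 : zeta ≠ 0 := Complex.exp_ne_zero _
  have hr' : (r : ℂ) ≠ 0 := by exact_mod_cast hr.ne'
  have h2 : (zeta ^ 2) ^ i = (zeta ^ 2) ^ j := by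
    have := mul_left_cancel₀ hr' h
    rw [pow_add, pow_add] at this
    simpa [pow_mul] using mul_right_cancel₀ (pow_ne_zero k h0) this
  have h3 : i ≡ j [MOD 5] := by
    rw [zeta_primitive.eq_orderOf]
    exact (zeta_primitive.isOfFinOrder (by norm_num)).pow_eq_pow_iff_modEq.mp h2
  simp only [Finset.coe_Icc, Set.mem_Icc] at hi hj
  unfold Nat.ModEq at h3
  omega

lemma sum_monomial (r : ℝ) (k a b : ℕ) :
    ∑ j ∈ Finset.Icc 1 5, pt r k j ^ a * (starRingEnd ℂ) (pt r k j) ^ b =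
      (r : ℂ) ^ (a + b) * zeta ^ (k * (a + 9 * b)) *
        ∑ j ∈ Finset.Icc 1 5, ((zeta ^ 2) ^ (a + 9 * b)) ^ j := by
  rw [Finset.mul_sum]
  refine Finset.sum_congr rfl fun j _ => ?_
  simp only [pt, map_mul, map_pow, conj_zeta, Complex.conj_ofReal]
  ring

lemma sum_root_pow {s : ℕ} (hs : s.Coprime 5) :
    ∑ j ∈ Finset.Icc 1 5, ((zeta ^ 2) ^ s) ^ j = 0 := by
  have h := (zeta_primitive.pow_of_coprime s hs)
  have h1 := h.geom_sum_eq_zero (by norm_num)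
  have h2 := h.pow_eq_one
  simp only [Finset.sum_range_succ, Finset.sum_range_zero] at h1
  simp only [show Finset.Icc 1 5 = ({1, 2, 3, 4, 5} : Finset ℕ) from rfl]
  simp
  linear_combination h1 + h2

/-! ### The design identity -/

/-- The design identity for `z ^ a * conj z ^ b` with `a + b ≤ 6`. Five equally spaced points on one
circle already integrate it exactly, except for `z ^ 5` and `conj z ^ 5`; for these the two
layers, rotated against each other by `π / 5`, contribute `-5` and `+5` once the weights
`r_k ^ (-5)` cancel the radii. -/
lemma monomial_identity {r₁ r₂ : ℝ} (h₁ : 0 < r₁) (h₂ : 0 < r₂) (a b : ℕ) (hab : a + b ≤ 6) :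
    5 / (r₁ : ℂ) ^ 5 * (if a = b then (r₁ : ℂ) ^ (2 * a) else 0) +
      5 / (r₂ : ℂ) ^ 5 * (if a = b then (r₂ : ℂ) ^ (2 * a) else 0) =
    1 / (r₁ : ℂ) ^ 5 *
        (∑ j ∈ Finset.Icc 1 5, pt r₁ 1 j ^ a * (starRingEnd ℂ) (pt r₁ 1 j) ^ b) +
      1 / (r₂ : ℂ) ^ 5 *
        (∑ j ∈ Finset.Icc 1 5, pt r₂ 2 j ^ a * (starRingEnd ℂ) (pt r₂ 2 j) ^ b) := by
  have h₁' : (r₁ : ℂ) ≠ 0 := by exact_mod_cast h₁.ne'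
  have h₂' : (r₂ : ℂ) ≠ 0 := by exact_mod_cast h₂.ne'
  rw [sum_monomial, sum_monomial]
  by_cases hs : (a + 9 * b).Coprime 5
  · rw [sum_root_pow hs]
    have : a ≠ b := by
      rintro rfl
      rw [show a + 9 * a = 5 * (2 * a) by ring] at hs
      exact absurd (hs.symm.eq_one_of_dvd (Dvd.intro _ rfl)) (by norm_num)
    simp [this]
  · have hdvd : 5 ∣ a + 9 * b := by
      by_contra h
      exact hs ((Nat.Prime.coprime_iff_not_dvd (by norm_num)).mpr h).symm
    obtain ⟨s, hs⟩ := hdvd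
    have hsum : ∑ j ∈ Finset.Icc 1 5, ((zeta ^ 2) ^ (a + 9 * b)) ^ j = 5 := by
      have : (zeta ^ 2) ^ (a + 9 * b) = 1 := by
        rw [hs, pow_mul, zeta_primitive.pow_eq_one, one_pow]
      simp [this]
    rw [hsum, hs, show 1 * (5 * s) = 5 * s by ring, show 2 * (5 * s) = 5 * (2 * s) by ring,
      pow_mul zeta, pow_mul zeta, zeta_pow_five, pow_mul (-1 : ℂ) 2 s]
    split_ifs with h
    · subst h
      have : s = 2 * a := by omega
      rw [this, pow_mul (-1 : ℂ)]
      norm_num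
      ring
    · -- `5 ∣ a - b ≠ 0` with `a + b ≤ 6` forces `{a, b} = {0, 5}`
      have h5 : a + b = 5 := by omega
      have hodd : Odd s := by
        rw [Nat.odd_iff]; omega
      rw [h5, hodd.neg_one_pow]
      field_simp
      norm_num

/-- The complex span of the functions `z ^ a * conj z ^ b` with `a + b ≤ d`. -/
def monoSpan (d : ℕ) : Submodule ℂ (ℂ → ℂ) :=
  Submodule.span ℂ {f | ∃ a b : ℕ, a + b ≤ d ∧ f = fun z => z ^ a * (starRingEnd ℂ) z ^ b}

lemma monoSpan_mono {d d' : ℕ} (h : d ≤ d') : monoSpan d ≤ monoSpan d' :=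
  Submodule.span_mono fun _ ⟨a, b, hab, hf⟩ => ⟨a, b, hab.trans h, hf⟩

lemma linear_mul_mem {d : ℕ} (α β : ℂ) {f : ℂ → ℂ} (hf : f ∈ monoSpan d) :
    (fun z => (α * z + β * (starRingEnd ℂ) z) * f z) ∈ monoSpan (d + 1) := by
  induction hf using Submodule.span_induction with
  | mem f hf =>
    obtain ⟨a, b, hab, rfl⟩ := hf
    have h1 : (fun z : ℂ => z ^ (a + 1) * (starRingEnd ℂ) z ^ b) ∈ monoSpan (d + 1) :=
      Submodule.subset_span ⟨a + 1, b, by omega, rfl⟩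
    have h2 : (fun z : ℂ => z ^ a * (starRingEnd ℂ) z ^ (b + 1)) ∈ monoSpan (d + 1) :=
      Submodule.subset_span ⟨a, b + 1, by omega, rfl⟩
    convert (monoSpan (d + 1)).add_mem ((monoSpan (d + 1)).smul_mem α h1)
      ((monoSpan (d + 1)).smul_mem β h2) using 1
    funext z
    simp only [Pi.add_apply, Pi.smul_apply, smul_eq_mul]
    ring
  | zero =>
    convert (monoSpan (d + 1)).zero_mem using 1
    funext z
    simp
  | add f g _ _ hf hg =>
    convert (monoSpan (d + 1)).add_mem hf hg using 1
    funext z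
    simp only [Pi.add_apply]; ring
  | smul c f _ hf =>
    convert (monoSpan (d + 1)).smul_mem c hf using 1
    funext z
    simp only [Pi.smul_apply, smul_eq_mul]; ring

lemma re_im_pow_mem (a b : ℕ) :
    (fun z : ℂ => (z.re : ℂ) ^ a * (z.im : ℂ) ^ b) ∈ monoSpan (a + b) := by
  induction a with
  | zero =>
    induction b with
    | zero => exact Submodule.subset_span ⟨0, 0, by omega, by simp⟩
    | succ b ih =>
      rw [← add_assoc]
      convert linear_mul_mem (1 / (2 * I)) (-(1 / (2 * I))) ih using 1
      funext z
      rw [Complex.im_eq_sub_conj]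
      ring
  | succ a ih =>
    rw [show a + 1 + b = a + b + 1 by ring]
    convert linear_mul_mem (1 / 2) (1 / 2) ih using 1
    funext z
    rw [Complex.re_eq_add_conj]
    ring

/-- Real polynomials of degree at most `d` in `(re z, im z)` are complex polynomials of degree at
most `d` in `(z, conj z)`. -/
lemma poly_mem {d : ℕ} (p : MvPolynomial (Fin 2) ℝ) (hp : p.totalDegree ≤ d) :
    (fun z : ℂ => ((evalPt (ident z) p : ℝ) : ℂ)) ∈ monoSpan d := by
  have : (fun z : ℂ => ((evalPt (ident z) p : ℝ) : ℂ)) =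
      ∑ m ∈ p.support, ((p.coeff m : ℝ) : ℂ) •
        (fun z : ℂ => (z.re : ℂ) ^ m 0 * (z.im : ℂ) ^ m 1) := by
    funext z
    simp [evalPt, MvPolynomial.eval_eq', Finset.sum_apply, ident_zero, ident_one]
  rw [this]
  refine Submodule.sum_mem _ fun m hm => Submodule.smul_mem _ _ (monoSpan_mono ?_ (re_im_pow_mem _ _))
  have h := (MvPolynomial.le_totalDegree hm).trans hp
  rwa [Finsupp.sum_fintype _ _ (by simp), Fin.sum_univ_two] at h

/-- The design identity extends by linearity from the monomials to their span. Continuity is carried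
along because additivity of the average needs integrability. -/
lemma design_identity {r₁ r₂ : ℝ} (h₁ : 0 < r₁) (h₂ : 0 < r₂) {f : ℂ → ℂ} (hf : f ∈ monoSpan 6) :
    Continuous f ∧
    5 / (r₁ : ℂ) ^ 5 * ⨍ z, f z ∂circleMeasure r₁ + 5 / (r₂ : ℂ) ^ 5 * ⨍ z, f z ∂circleMeasure r₂ =
      1 / (r₁ : ℂ) ^ 5 * (∑ j ∈ Finset.Icc 1 5, f (pt r₁ 1 j)) +
      1 / (r₂ : ℂ) ^ 5 * (∑ j ∈ Finset.Icc 1 5, f (pt r₂ 2 j)) := by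
  induction hf using Submodule.span_induction with
  | mem f hf =>
    obtain ⟨a, b, hab, rfl⟩ := hf
    refine ⟨by fun_prop, ?_⟩
    rw [average_monomial h₁, average_monomial h₂]
    exact monomial_identity h₁ h₂ a b hab
  | zero => exact ⟨continuous_zero, by simp [average_eq]⟩
  | add f g _ _ hf hg =>
    refine ⟨hf.1.add hg.1, ?_⟩
    have hadd (r : ℝ) : ⨍ z, (f + g) z ∂circleMeasure r =
        ⨍ z, f z ∂circleMeasure r + ⨍ z, g z ∂circleMeasure r := by
      simp only [average_eq, Pi.add_apply]
      rw [integral_add (integrable_circleMeasure hf.1 r) (integrable_circleMeasure hg.1 r),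
        smul_add]
    rw [hadd, hadd]
    simp only [Pi.add_apply, Finset.sum_add_distrib]
    linear_combination hf.2 + hg.2
  | smul c f _ hf =>
    refine ⟨hf.1.const_smul c, ?_⟩
    have hsmul (r : ℝ) : ⨍ z, (c • f) z ∂circleMeasure r = c * ⨍ z, f z ∂circleMeasure r := by
      simp only [average_eq, Pi.smul_apply]
      rw [integral_smul, smul_comm, smul_eq_mul]
    rw [hsmul, hsmul]
    simp only [Pi.smul_apply, smul_eq_mul, ← Finset.mul_sum]
    linear_combination c * hf.2

/-! ### Cubics on two concentric circles -/

/-- A cubic vanishing on two concentric circles is zero: its restriction to a line through the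
origin has degree at most `3` and the four roots `±r₁`, `±r₂`. -/
lemma eq_zero_of_vanish {r₁ r₂ : ℝ} (h₁ : 0 < r₁) (h₂ : 0 < r₂) (hne : r₁ ≠ r₂)
    (p : MvPolynomial (Fin 2) ℝ) (hp : p.totalDegree ≤ 3)
    (hv : ∀ y : Euc 2, ‖y‖ = r₁ ∨ ‖y‖ = r₂ → evalPt y p = 0) : p = 0 := by
  have key : ∀ u : Euc 2, ‖u‖ = 1 → ∀ t : ℝ, evalPt (t • u) p = 0 := by
    intro u hu t
    set q : Polynomial ℝ := MvPolynomial.aeval (fun i => Polynomial.C (u i) * Polynomial.X) p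
    have hq : ∀ s : ℝ, q.eval s = evalPt (s • u) p := by
      intro s
      simp only [q, evalPt]
      rw [MvPolynomial.aeval_def, ← Polynomial.coe_evalRingHom, MvPolynomial.eval₂_eq',
        MvPolynomial.eval_eq', map_sum]
      refine Finset.sum_congr rfl fun m _ => ?_
      simp [mul_comm s]
    have hdeg : q.natDegree ≤ 3 := by
      refine (MvPolynomial.aeval_natDegree_le p hp _ (n := 1) fun i => ?_).trans (by norm_num)
      exact (Polynomial.natDegree_C_mul_le _ _).trans Polynomial.natDegree_X_le
    have hq0 : q = 0 := by
      refine Polynomial.eq_zero_of_natDegree_lt_card_of_eval_eq_zero' q {r₁, -r₁, r₂, -r₂} ?_ ?_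
      · intro s hs
        rw [hq]
        apply hv
        rw [norm_smul, hu, mul_one, Real.norm_eq_abs]
        simp only [Finset.mem_insert, Finset.mem_singleton] at hs
        rcases hs with rfl | rfl | rfl | rfl <;> simp [abs_of_pos, h₁, h₂]
      · have hcard : ({r₁, -r₁, r₂, -r₂} : Finset ℝ).card = 4 := by
          rw [Finset.card_insert_of_notMem, Finset.card_insert_of_notMem,
            Finset.card_insert_of_notMem, Finset.card_singleton]
          · simp; intro h; linarith
          · simp only [Finset.mem_insert, Finset.mem_singleton, not_or]
            exact ⟨fun h => by linarith, fun h => hne (by linarith)⟩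
          · simp only [Finset.mem_insert, Finset.mem_singleton, not_or]
            exact ⟨fun h => by linarith, hne, fun h => by linarith⟩
        omega
    rw [← hq, hq0, Polynomial.eval_zero]
  apply MvPolynomial.funext
  intro x
  rw [map_zero]
  set y : Euc 2 := WithLp.toLp 2 x
  have hx : MvPolynomial.eval x p = evalPt y p := rfl
  rw [hx]
  by_cases hy : y = 0
  · have h := key (ident 1) (by simp) 0
    rwa [zero_smul, ← hy] at h
  · have h := key (‖y‖⁻¹ • y) (norm_smul_inv_norm hy) ‖y‖
    rwa [smul_smul, mul_inv_cancel₀ (norm_ne_zero_iff.mpr hy), one_smul] at h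

/-- The monomials `x ^ a * y ^ b` with `a + b ≤ 3` form a basis, and there are ten of them. -/
lemma finrank_cubics :
    Module.finrank ℝ (MvPolynomial.restrictTotalDegree (Fin 2) ℝ 3) = 10 := by
  rw [MvPolynomial.restrictTotalDegree,
    Module.finrank_eq_nat_card_basis (MvPolynomial.basisRestrictSupport ℝ _)]
  let T : Finset (Fin 4 × Fin 4) := Finset.univ.filter fun ab => ab.1.val + ab.2.val ≤ 3
  have e : {n : Fin 2 →₀ ℕ | (n.sum fun _ e => e) ≤ 3} ≃ T :=
    { toFun := fun n => ⟨(⟨n.1 0, by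
          have := n.2
          rw [Set.mem_ofPred_eq, Finsupp.sum_fintype _ _ (by simp), Fin.sum_univ_two] at this
          omega⟩, ⟨n.1 1, by
          have := n.2
          rw [Set.mem_ofPred_eq, Finsupp.sum_fintype _ _ (by simp), Fin.sum_univ_two] at this
          omega⟩), by
          have := n.2
          rw [Set.mem_ofPred_eq, Finsupp.sum_fintype _ _ (by simp), Fin.sum_univ_two] at this
          simpa [T] using this⟩
      invFun := fun t => ⟨Finsupp.equivFunOnFinite.symm ![t.1.1.val, t.1.2.val], by
          have := t.2
          rw [Set.mem_ofPred_eq, Finsupp.sum_fintype _ _ (by simp), Fin.sum_univ_two]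
          exact (Finset.mem_filter.mp this).2⟩
      left_inv := by
        rintro ⟨n, hn⟩
        ext i
        fin_cases i <;> simp
      right_inv := by
        rintro ⟨⟨a, b⟩, h⟩
        simp }
  rw [Nat.card_congr e, Nat.card_eq_fintype_card, Fintype.card_coe]
  rfl

/-- On any set containing two concentric circles, restriction of cubics is injective. -/
lemma dimPolOn_cubics {r₁ r₂ : ℝ} (h₁ : 0 < r₁) (h₂ : 0 < r₂) (hne : r₁ ≠ r₂) (S : Set (Euc 2))
    (hS : ∀ y : Euc 2, ‖y‖ = r₁ ∨ ‖y‖ = r₂ → y ∈ S) : dimPolOn 2 3 S = 10 := by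
  rw [← finrank_cubics, dimPolOn, PolOn]
  set R := MvPolynomial.restrictTotalDegree (Fin 2) ℝ 3
  rw [← Submodule.range_subtype R, ← LinearMap.range_comp, Submodule.range_subtype]
  refine LinearMap.finrank_range_of_inj ?_
  rw [← LinearMap.ker_eq_bot, LinearMap.ker_eq_bot']
  rintro ⟨p, hp⟩ h
  have hp' := (MvPolynomial.mem_restrictTotalDegree _ _ _).mp hp
  refine Subtype.ext (eq_zero_of_vanish h₁ h₂ hne p hp' fun y hy => ?_)
  exact congrFun h ⟨y, hS y hy⟩

/-! ### Sums over the configuration -/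

lemma norm_bajnokPt {r : ℝ} (hr : 0 < r) (k j : ℕ) : ‖bajnokPt r k j‖ = r := by
  rw [← ident_pt, LinearIsometryEquiv.norm_map, norm_pt hr]

lemma bajnokPt_injOn {r : ℕ → ℝ} (h₁ : 0 < r 1) (h₂ : 0 < r 2) (hne : r 1 ≠ r 2) :
    Set.InjOn (fun kj : ℕ × ℕ => bajnokPt (r kj.1) kj.1 kj.2)
      (Finset.Icc 1 2 ×ˢ Finset.Icc 1 5 : Finset (ℕ × ℕ)) := by
  have hpos : ∀ k ∈ Finset.Icc 1 2, 0 < r k := by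
    intro k hk
    obtain rfl | rfl : k = 1 ∨ k = 2 := by simp at hk; omega
    exacts [h₁, h₂]
  rintro ⟨k, i⟩ hki ⟨l, j⟩ hlj h
  simp only [Finset.mem_coe, Finset.mem_product] at hki hlj h
  have hkl : k = l := by
    have hnorm := congrArg norm h
    rw [norm_bajnokPt (hpos k hki.1), norm_bajnokPt (hpos l hlj.1)] at hnorm
    have h1 := Finset.mem_Icc.mp hki.1
    have h2 := Finset.mem_Icc.mp hlj.1
    obtain rfl | rfl : k = 1 ∨ k = 2 := by omega
    all_goals obtain rfl | rfl : l = 1 ∨ l = 2 := by omega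
    exacts [rfl, absurd hnorm hne, absurd hnorm.symm hne, rfl]
  subst hkl
  rw [← ident_pt, ← ident_pt] at h
  rw [pt_injOn (hpos k hki.1) k hki.2 hlj.2 (ident.injective h)]

/-- A sum over the configuration, split into its two layers. -/
lemma sum_config {r : ℕ → ℝ} (h₁ : 0 < r 1) (h₂ : 0 < r 2) (hne : r 1 ≠ r 2) (g : Euc 2 → ℝ) :
    ∑ x ∈ (Finset.Icc 1 2 ×ˢ Finset.Icc 1 5).image
      (fun kj : ℕ × ℕ => bajnokPt (r kj.1) kj.1 kj.2), g x =
    (∑ j ∈ Finset.Icc 1 5, g (bajnokPt (r 1) 1 j)) +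
      ∑ j ∈ Finset.Icc 1 5, g (bajnokPt (r 2) 2 j) := by
  rw [Finset.sum_image (bajnokPt_injOn h₁ h₂ hne), Finset.sum_product,
    show Finset.Icc 1 2 = ({1, 2} : Finset ℕ) from rfl, Finset.sum_pair (by norm_num)]

end Bajnok

/-- For any distinct positive radii `r 1 ≠ r 2`, Bajnok's configuration
`X = {b_{kj} : 1 ≤ j ≤ 5, k = 1, 2} ⊆ ℝ²` with weight `w(b_{kj}) = r_k⁻⁵` is a tight
Euclidean 6-design in `ℝ²` supported by two concentric spheres; in particular
`|X| = 10 = dim Pol₃(ℝ²)`. -/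
theorem bajnok_configuration_is_tight_euclidean_six_design
    (r : ℕ → ℝ) (hr1 : 0 < r 1) (hr2 : 0 < r 2) (hrne : r 1 ≠ r 2)
    (X : Finset (Euc 2))
    (hX : X = (Finset.Icc 1 2 ×ˢ Finset.Icc 1 5).image
      (fun kj => bajnokPt (r kj.1) kj.1 kj.2))
    (w : Euc 2 → ℝ) (hw : w = fun x => 1 / ‖x‖ ^ 5) :
    (∀ k ∈ Finset.Icc 1 2, ∀ j ∈ Finset.Icc 1 5,
        w (bajnokPt (r k) k j) = 1 / r k ^ 5) ∧
    (∀ x ∈ X, 0 < w x) ∧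
    X.image (fun x => ‖x‖) = {r 1, r 2} ∧
    IsTightDesign 2 3 X w ∧
    X.card = 10 ∧
    dimPolOn 2 3 (Set.univ : Set (Euc 2)) = 10 := by
  have hpos : ∀ k ∈ Finset.Icc 1 2, 0 < r k := by
    intro k hk
    obtain rfl | rfl : k = 1 ∨ k = 2 := by simp at hk; omega
    exacts [hr1, hr2]
  have hsum : ∀ g : Euc 2 → ℝ, ∑ x ∈ X, g x =
      (∑ j ∈ Finset.Icc 1 5, g (bajnokPt (r 1) 1 j)) +
        ∑ j ∈ Finset.Icc 1 5, g (bajnokPt (r 2) 2 j) := by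
    rw [hX]
    exact Bajnok.sum_config hr1 hr2 hrne
  have himage : X.image (fun x => ‖x‖) = {r 1, r 2} := by
    ext s
    simp only [hX, Finset.mem_image, Finset.mem_product, Finset.mem_insert, Finset.mem_singleton]
    constructor
    · rintro ⟨_, ⟨⟨k, j⟩, ⟨hk, _⟩, rfl⟩, rfl⟩
      rw [Bajnok.norm_bajnokPt (hpos k hk)]
      obtain rfl | rfl : k = 1 ∨ k = 2 := by simp at hk; omega
      exacts [Or.inl rfl, Or.inr rfl]
    · rintro (rfl | rfl)
      · exact ⟨_, ⟨(1, 1), by simp, rfl⟩, Bajnok.norm_bajnokPt hr1 1 1⟩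
      · exact ⟨_, ⟨(2, 1), by simp, rfl⟩, Bajnok.norm_bajnokPt hr2 2 1⟩
  have hcard : X.card = 10 := by
    rw [hX, Finset.card_image_of_injOn (Bajnok.bajnokPt_injOn hr1 hr2 hrne)]
    rfl
  have hdim : dimPolOn 2 3 (suppSpheres 2 X) = 10 := by
    refine Bajnok.dimPolOn_cubics hr1 hr2 hrne _ fun y hy => ?_
    rw [suppSpheres, himage]
    simpa using hy
  have hweight : ∀ k ∈ Finset.Icc 1 2, ∀ j, w (bajnokPt (r k) k j) = 1 / r k ^ 5 := by
    intro k hk j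
    simp only [hw, Bajnok.norm_bajnokPt (hpos k hk)]
  have hw1 := hweight 1 (by simp)
  have hw2 := hweight 2 (by simp)
  have hdesign : IsEuclideanDesign 2 (2 * 3) X w := by
    intro p hp
    rw [himage, Finset.sum_pair hrne]
    simp only [Finset.sum_filter]
    rw [hsum, hsum, hsum]
    simp only [hw1, hw2, Bajnok.norm_bajnokPt hr1, Bajnok.norm_bajnokPt hr2, if_true,
      if_neg hrne, if_neg hrne.symm, Finset.sum_const_zero, Finset.sum_const, Nat.card_Icc,
      ← Finset.mul_sum]
    have h := (Bajnok.design_identity hr1 hr2 (Bajnok.poly_mem p hp)).2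
    rw [← Bajnok.sphAvg_eq hr1 (fun y => evalPt y p), ← Bajnok.sphAvg_eq hr2 (fun y => evalPt y p)]
      at h
    simp only [Bajnok.ident_pt] at h
    have h' : 5 / r 1 ^ 5 * sphAvg 2 (r 1) (fun y => evalPt y p) +
        5 / r 2 ^ 5 * sphAvg 2 (r 2) (fun y => evalPt y p) =
        1 / r 1 ^ 5 * (∑ j ∈ Finset.Icc 1 5, evalPt (bajnokPt (r 1) 1 j) p) +
        1 / r 2 ^ 5 * (∑ j ∈ Finset.Icc 1 5, evalPt (bajnokPt (r 2) 2 j) p) := by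
      exact_mod_cast h
    rw [← h']
    simp only [nsmul_eq_mul]
    push_cast
    ring
  refine ⟨fun k hk j _ => hweight k hk j, ?_, himage,
    ⟨⟨hdesign, hcard.trans hdim.symm⟩, hdim⟩, hcard,
    Bajnok.dimPolOn_cubics hr1 hr2 hrne _ fun _ _ => Set.mem_univ _⟩
  intro x hx
  rw [hX, Finset.mem_image] at hx
  obtain ⟨⟨k, j⟩, hkj, rfl⟩ := hx
  have hk := (Finset.mem_product.mp hkj).1
  rw [hweight k hk]
  have := hpos k hk
  positivity

end
end

section
/- If (X, w) is a tight Euclidean 6-design in ℝⁿ (n ≥ 2), then 0 ∉ X. -/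
/-!
Let `L p = ∑ x ∈ X, w x * p x`. By the design property, on polynomials of degree at most `6` the
functional `L` is a combination of averages over spheres centred at the origin, hence
`L (p ∘ O) = L p` for every linear isometry `O` (`design_invariant`). Everything else is deduced
from this invariance, so no explicit spherical integral is needed.

* If `h` has degree at most `3` and vanishes on `X`, then `L ((h ∘ O)²) = L (h²) = 0`, so `h ∘ O`
  vanishes on `X` by positivity of the weights. Since the isometries act transitively on each
  sphere, `h` vanishes on `S` (`vanish_on_spheres`). Thus the evaluation `Pol₃(S) → ℝ^X` is
  injective, and it is bijective because `|X| = dim Pol₃(S)`.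
* Suppose `0 ∈ X`, and choose `f` of degree at most `3` with `f 0 = 1` and `f = 0` on `X \ {0}`.
  Expanding the square and using `O 0 = 0` gives
  `L ((f ∘ O - f)²) = 2 L (f²) - 2 L ((f ∘ O) f) = 2 w(0) - 2 w(0) = 0`, so `f ∘ O = f` on `X`.
  By transitivity `f` vanishes on `S \ {0}`.
* Let `g` be the even part of `f`. It has degree at most `2`, because `3` is odd; it vanishes on
  `S \ {0}`, because `S = -S`; and `g 0 = 1`. Hence `x₀ g` is a nonzero polynomial of degree at most
  `3` vanishing on all of `S`. This contradicts `dim Pol₃(S) = C(n+3, 3) = dim Pol₃(ℝⁿ)`, which says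
  that restriction to `S` is injective on `Pol₃(ℝⁿ)`.
-/

open MeasureTheory Metric Finset
open scoped Classical RealInnerProductSpace

noncomputable section

/-- The polynomial `p ∘ O`, where `O` is a linear isometry of `ℝⁿ`: each variable is replaced by
the corresponding coordinate form of `O`. -/
def rot {n : ℕ} (O : Euc n ≃ₗᵢ[ℝ] Euc n) (p : MvPolynomial (Fin n) ℝ) : MvPolynomial (Fin n) ℝ :=
  MvPolynomial.aeval
    (fun i => ∑ j, MvPolynomial.C (O (EuclideanSpace.single j 1) i) * MvPolynomial.X j) p

lemma evalPt_rot {n : ℕ} (O : Euc n ≃ₗᵢ[ℝ] Euc n) (p : MvPolynomial (Fin n) ℝ) (x : Euc n) :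
    evalPt x (rot O p) = evalPt (O x) p := by
  unfold evalPt rot
  rw [← MvPolynomial.coe_aeval_eq_eval, ← MvPolynomial.coe_aeval_eq_eval]
  simp only [RingHom.coe_coe]
  rw [← AlgHom.comp_apply, MvPolynomial.comp_aeval]
  congr 2
  funext i
  have hx : x = ∑ j, x j • EuclideanSpace.single j (1 : ℝ) := by
    ext k
    simp [Pi.single_apply]
  conv_rhs => rw [hx, map_sum]
  simp [mul_comm]

lemma totalDegree_rot {n : ℕ} (O : Euc n ≃ₗᵢ[ℝ] Euc n) (p : MvPolynomial (Fin n) ℝ) {t : ℕ}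
    (hp : p.totalDegree ≤ t) : (rot O p).totalDegree ≤ t := by
  rw [← MvPolynomial.sum_homogeneousComponent p]
  unfold rot
  rw [map_sum]
  refine MvPolynomial.totalDegree_finsetSum_le fun i hi => ?_
  have := ((MvPolynomial.homogeneousComponent_isHomogeneous i p).aeval (n := 1)
    (fun i => ∑ j, MvPolynomial.C (O (EuclideanSpace.single j 1) i) * MvPolynomial.X j)
    (fun i => MvPolynomial.IsHomogeneous.sum _ _ _ fun j _ =>
      MvPolynomial.isHomogeneous_C_mul_X _ _)).totalDegree_le
  have hi' := Finset.mem_range.1 hi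
  omega

lemma sphAvg_comp_isometry {n : ℕ} (O : Euc n ≃ₗᵢ[ℝ] Euc n) (r : ℝ) (f : Euc n → ℝ) :
    sphAvg n r (fun y => f (O y)) = sphAvg n r f := by
  unfold sphAvg
  split_ifs with h
  · simp
  · have hpre : O ⁻¹' Metric.sphere (0 : Euc n) r = Metric.sphere 0 r := by
      ext y; simp
    have key := (O.toIsometryEquiv.measurePreserving_hausdorffMeasure
      ((n : ℝ) - 1)).setIntegral_preimage_emb
        O.toIsometryEquiv.toHomeomorph.measurableEmbedding f (Metric.sphere 0 r)
    rw [setAverage_eq, setAverage_eq]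
    congr 1
    exact (congrArg (fun s => ∫ y in s, f (O y) ∂μH[(n : ℝ) - 1]) hpre.symm).trans key

/-- The discrete measure of a Euclidean `t`-design is invariant under linear isometries when it is
tested against polynomials of degree at most `t`. -/
lemma design_invariant {n t : ℕ} {X : Finset (Euc n)} {w : Euc n → ℝ}
    (h : IsEuclideanDesign n t X w) (O : Euc n ≃ₗᵢ[ℝ] Euc n) (p : MvPolynomial (Fin n) ℝ)
    (hp : p.totalDegree ≤ t) :
    ∑ x ∈ X, w x * evalPt (O x) p = ∑ x ∈ X, w x * evalPt x p := by
  have h1 := h (rot O p) (totalDegree_rot O p hp)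
  simp only [evalPt_rot] at h1
  rw [← h1, ← h p hp]
  refine Finset.sum_congr rfl fun r _ => ?_
  rw [sphAvg_comp_isometry O r (fun y => evalPt y p)]

lemma exists_isometry {n : ℕ} {x y : Euc n} (h : ‖x‖ = ‖y‖) :
    ∃ O : Euc n ≃ₗᵢ[ℝ] Euc n, O x = y :=
  ⟨_, Submodule.reflection_sub h⟩

lemma mem_suppSpheres {n : ℕ} {X : Finset (Euc n)} {y : Euc n} :
    y ∈ suppSpheres n X ↔ ∃ x ∈ X, ‖x‖ = ‖y‖ := by
  simp [suppSpheres, eq_comm]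

lemma eq_zero_of_sum_sq {n : ℕ} {X : Finset (Euc n)} {w : Euc n → ℝ}
    (hw : ∀ x ∈ X, 0 < w x) {d : Euc n → ℝ} (h : ∑ x ∈ X, w x * d x ^ 2 = 0) :
    ∀ x ∈ X, d x = 0 := by
  intro x hx
  have := (Finset.sum_eq_zero_iff_of_nonneg
    (fun x hx => mul_nonneg (hw x hx).le (sq_nonneg (d x)))).1 h x hx
  simpa [(hw x hx).ne'] using this

/-- A polynomial of degree at most `e` vanishing on a `2e`-design vanishes on all the supporting
spheres: its square is invariant under isometries, so every rotated copy vanishes on `X`. -/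
lemma vanish_on_spheres {n e : ℕ} {X : Finset (Euc n)} {w : Euc n → ℝ}
    (hw : ∀ x ∈ X, 0 < w x) (hd : IsEuclideanDesign n (2 * e) X w)
    {p : MvPolynomial (Fin n) ℝ} (hp : p.totalDegree ≤ e) (h0 : ∀ x ∈ X, evalPt x p = 0) :
    ∀ y ∈ suppSpheres n X, evalPt y p = 0 := by
  intro y hy
  obtain ⟨x, hx, hxy⟩ := mem_suppSpheres.1 hy
  obtain ⟨O, rfl⟩ := exists_isometry hxy
  have hdeg : (p ^ 2).totalDegree ≤ 2 * e :=
    (MvPolynomial.totalDegree_pow _ _).trans (by omega)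
  have h := design_invariant hd O (p ^ 2) hdeg
  have hsq : ∀ z : Euc n, evalPt z (p ^ 2) = evalPt z p ^ 2 := fun z => by simp [evalPt]
  simp only [hsq] at h
  rw [Finset.sum_eq_zero (s := X) (f := fun x => w x * evalPt x p ^ 2)
    (fun x hx => by simp [h0 x hx])] at h
  exact eq_zero_of_sum_sq hw (d := fun x => evalPt (O x) p) h x hx

/-- For a tight design, every function on `X` is interpolated by a polynomial of degree at most
`e`. -/
lemma exists_interpolation {n e : ℕ} {X : Finset (Euc n)} {w : Euc n → ℝ}
    (hw : ∀ x ∈ X, 0 < w x) (ht : IsTightOnS n e X w) (v : Euc n → ℝ) :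
    ∃ p : MvPolynomial (Fin n) ℝ, p.totalDegree ≤ e ∧ ∀ x ∈ X, evalPt x p = v x := by
  have hXS : ∀ x : X, (x : Euc n) ∈ suppSpheres n X := fun x =>
    mem_suppSpheres.2 ⟨x, x.2, rfl⟩
  let ev : PolOn n e (suppSpheres n X) →ₗ[ℝ] (X → ℝ) :=
    (LinearMap.funLeft ℝ ℝ (fun x : X => (⟨x, hXS x⟩ : suppSpheres n X))).comp
      (PolOn n e (suppSpheres n X)).subtype
  have : FiniteDimensional ℝ (PolOn n e (suppSpheres n X)) := by
    unfold PolOn; infer_instance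
  have hinj : Function.Injective ev := by
    rw [injective_iff_map_eq_zero]
    rintro ⟨q, p, hp, rfl⟩ hq
    have hp' : p.totalDegree ≤ e := (MvPolynomial.mem_restrictTotalDegree _ _ _).1 hp
    have := vanish_on_spheres hw ht.1 hp' (fun x hx => congrFun hq ⟨x, hx⟩)
    ext y
    exact this y y.2
  have hfin : Module.finrank ℝ (PolOn n e (suppSpheres n X)) = Module.finrank ℝ (X → ℝ) := by
    rw [Module.finrank_fintype_fun_eq_card, Fintype.card_coe]
    exact ht.2.symm
  have hsurj := (LinearMap.injective_iff_surjective_of_finrank_eq_finrank hfin).1 hinj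
  obtain ⟨⟨q, p, hp, rfl⟩, hq⟩ := hsurj (fun x => v x)
  exact ⟨p, (MvPolynomial.mem_restrictTotalDegree _ _ _).1 hp, fun x hx => congrFun hq ⟨x, hx⟩⟩

/-- `dim Pol_e(ℝⁿ) ≤ C(n+e, e)`: monomials of degree at most `e` in `n` variables inject into the
monomials of degree exactly `e` in `n + 1` variables by homogenization. -/
lemma finrank_restrictTotalDegree_le (n e : ℕ) :
    Module.finrank ℝ (MvPolynomial.restrictTotalDegree (Fin n) ℝ e) ≤ (n + e).choose e := by
  have hb := Module.finrank_eq_nat_card_basis (MvPolynomial.basisRestrictSupport ℝ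
    {m : Fin n →₀ ℕ | (m.sum fun _ k => k) ≤ e})
  have hc := Finset.card_finsuppAntidiag_nat_eq_choose
    (s := (Finset.univ : Finset (Option (Fin n)))) e
  have hn : #(Finset.univ : Finset (Option (Fin n))) + e - 1 = n + e := by
    simp
  rw [hn] at hc
  unfold MvPolynomial.restrictTotalDegree
  rw [hb, ← hc, ← Nat.card_eq_finsetCard]
  have hmem : ∀ m : {m : Fin n →₀ ℕ | (m.sum fun _ k => k) ≤ e},
      (m : Fin n →₀ ℕ).optionElim (e - m.1.sum fun _ k => k) ∈
        Finset.finsuppAntidiag (Finset.univ : Finset (Option (Fin n))) e := by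
    rintro ⟨m, hm⟩
    have hm' : (m.sum fun _ k => k) ≤ e := hm
    rw [Finsupp.sum_fintype _ _ (fun _ => rfl)] at hm'
    simp [Fintype.sum_option, Finsupp.sum_fintype, hm']
  refine Nat.card_le_card_of_injective (fun m => ⟨_, hmem m⟩) fun a b hab => ?_
  have := congrArg (fun z => Finsupp.some z.1) hab
  simpa [Subtype.ext_iff] using this

lemma evalPt_neg_of_isHomogeneous {n k : ℕ} {p : MvPolynomial (Fin n) ℝ} (hp : p.IsHomogeneous k)
    (y : Euc n) : evalPt (-y) p = (-1) ^ k * evalPt y p := by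
  unfold evalPt
  rw [MvPolynomial.eval_eq', MvPolynomial.eval_eq', Finset.mul_sum]
  refine Finset.sum_congr rfl fun d hd => ?_
  have h1 : ∑ i, d i = k := by
    rw [← hp (MvPolynomial.mem_support_iff.1 hd), Finsupp.weight_apply, Finsupp.sum_fintype] <;>
    simp
  have h2 : ∏ i, (-y) i ^ d i = (-1) ^ k * ∏ i, y i ^ d i := by
    rw [← h1, ← Finset.prod_pow_eq_pow_sum, ← Finset.prod_mul_distrib]
    refine Finset.prod_congr rfl fun i _ => ?_
    rw [PiLp.neg_apply, neg_pow]
  rw [h2]; ring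

/-- The even part of a polynomial of degree at most `3` has degree at most `2`. -/
lemma exists_even_part {n : ℕ} {f : MvPolynomial (Fin n) ℝ} (hf : f.totalDegree ≤ 3) :
    ∃ g : MvPolynomial (Fin n) ℝ, g.totalDegree ≤ 2 ∧
      ∀ y : Euc n, 2 * evalPt y g = evalPt y f + evalPt (-y) f := by
  have hsum : f = ∑ i ∈ Finset.range 4, MvPolynomial.homogeneousComponent i f := by
    conv_lhs => rw [← MvPolynomial.sum_homogeneousComponent f]
    refine Finset.sum_subset (Finset.range_mono (by omega)) fun i _ hi => ?_
    exact MvPolynomial.homogeneousComponent_eq_zero _ _ (by simpa using hi)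
  have hh := fun i => MvPolynomial.homogeneousComponent_isHomogeneous i f
  refine ⟨MvPolynomial.homogeneousComponent 0 f + MvPolynomial.homogeneousComponent 2 f,
    (MvPolynomial.totalDegree_add _ _).trans
      (max_le ((hh 0).totalDegree_le.trans (by norm_num)) (hh 2).totalDegree_le), fun y => ?_⟩
  have hadd : ∀ (z : Euc n) (p q : MvPolynomial (Fin n) ℝ),
      evalPt z (p + q) = evalPt z p + evalPt z q := fun z p q => by simp [evalPt]
  have e1 : ∀ z : Euc n, evalPt z f = evalPt z (MvPolynomial.homogeneousComponent 0 f)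
      + evalPt z (MvPolynomial.homogeneousComponent 1 f)
      + evalPt z (MvPolynomial.homogeneousComponent 2 f)
      + evalPt z (MvPolynomial.homogeneousComponent 3 f) := fun z => by
    conv_lhs => rw [hsum]
    simp only [Finset.sum_range_succ, Finset.sum_range_zero, zero_add, hadd]
  rw [e1 y, e1 (-y), hadd]
  simp only [evalPt_neg_of_isHomogeneous (hh _)]
  ring

/-- The polynomial interpolating the indicator function of the origin is invariant under isometries
on `X`, hence vanishes on all the nonzero supporting spheres. -/
lemma interpolant_vanish {n e : ℕ} {X : Finset (Euc n)} {w : Euc n → ℝ}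
    (hw : ∀ x ∈ X, 0 < w x) (hd : IsEuclideanDesign n (2 * e) X w) (h0 : (0 : Euc n) ∈ X)
    {f : MvPolynomial (Fin n) ℝ} (hf : f.totalDegree ≤ e)
    (hfX : ∀ x ∈ X, evalPt x f = if x = 0 then 1 else 0) :
    ∀ y ∈ suppSpheres n X, y ≠ 0 → evalPt y f = 0 := by
  intro y hy hy0
  obtain ⟨x, hx, hxy⟩ := mem_suppSpheres.1 hy
  have hx0 : x ≠ 0 := by
    rintro rfl
    exact hy0 (norm_eq_zero.1 (by rw [← hxy, norm_zero]))
  obtain ⟨O, rfl⟩ := exists_isometry hxy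
  have hdeg : (f ^ 2).totalDegree ≤ 2 * e :=
    (MvPolynomial.totalDegree_pow _ _).trans (by omega)
  have hinv := design_invariant hd O (f ^ 2) hdeg
  have hsq : ∀ z : Euc n, evalPt z (f ^ 2) = evalPt z f ^ 2 := fun z => by simp [evalPt]
  simp only [hsq] at hinv
  -- Both `L (f²)` and `L ((f ∘ O) f)` only see the origin, which `O` fixes.
  have hff : ∑ x ∈ X, w x * evalPt x f ^ 2 = w 0 := by
    rw [Finset.sum_eq_single_of_mem 0 h0 (fun b hb hb0 => by simp [hfX b hb, hb0]), hfX 0 h0]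
    simp
  have hOf : ∑ x ∈ X, w x * (evalPt (O x) f * evalPt x f) = w 0 := by
    rw [Finset.sum_eq_single_of_mem 0 h0 (fun b hb hb0 => by simp [hfX b hb, hb0]), map_zero,
      hfX 0 h0]
    simp
  have hsum : ∑ x ∈ X, w x * (evalPt (O x) f - evalPt x f) ^ 2 = 0 := by
    have : ∑ x ∈ X, w x * (evalPt (O x) f - evalPt x f) ^ 2
        = ∑ x ∈ X, w x * evalPt (O x) f ^ 2
          - 2 * ∑ x ∈ X, w x * (evalPt (O x) f * evalPt x f)
          + ∑ x ∈ X, w x * evalPt x f ^ 2 := by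
      rw [Finset.mul_sum, ← Finset.sum_sub_distrib, ← Finset.sum_add_distrib]
      exact Finset.sum_congr rfl fun x _ => by ring
    rw [this, hinv, hff, hOf]; ring
  have := eq_zero_of_sum_sq hw (d := fun x => evalPt (O x) f - evalPt x f) hsum x hx
  simpa [hfX x hx, hx0] using this

/-- If `Pol_e(S)` has the full dimension `C(n+e, e)`, a polynomial of degree at most `e` vanishing
on `S` is zero. -/
lemma eq_zero_of_vanish {n e : ℕ} {S : Set (Euc n)} (hS : dimPolOn n e S = (n + e).choose e)
    {p : MvPolynomial (Fin n) ℝ} (hp : p.totalDegree ≤ e) (h0 : ∀ y ∈ S, evalPt y p = 0) :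
    p = 0 := by
  let φ := (polyRestrict n S).domRestrict (MvPolynomial.restrictTotalDegree (Fin n) ℝ e)
  have hrange : LinearMap.range φ = PolOn n e S := by
    simp only [φ, PolOn, LinearMap.range_domRestrict]
  have hrn := LinearMap.finrank_range_add_finrank_ker φ
  rw [hrange] at hrn
  have hle := finrank_restrictTotalDegree_le n e
  unfold dimPolOn at hS
  have hker : LinearMap.ker φ = ⊥ := Submodule.finrank_eq_zero.1 (by omega)
  have hpm := (MvPolynomial.mem_restrictTotalDegree (Fin n) e p).2 hp
  have : (⟨p, hpm⟩ : MvPolynomial.restrictTotalDegree (Fin n) ℝ e) ∈ LinearMap.ker φ := by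
    rw [LinearMap.mem_ker]
    funext y
    exact h0 y y.2
  rw [hker, Submodule.mem_bot] at this
  exact congrArg Subtype.val this

/-- If `(X, w)` is a tight Euclidean 6-design in `ℝⁿ` (`n ≥ 2`),
then `0 ∉ X`. -/
theorem zero_not_mem_of_tight_euclidean_six_design (n : ℕ) (hn : 2 ≤ n)
    (X : Finset (Euc n)) (w : Euc n → ℝ)
    (hne : X.Nonempty) (hw : ∀ x ∈ X, 0 < w x)
    (ht : IsTightDesign n 3 X w) :
    (0 : Euc n) ∉ X := by
  intro h0
  obtain ⟨hT, hdim⟩ := ht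
  obtain ⟨f, hf, hfX⟩ := exists_interpolation hw hT (fun x => if x = 0 then 1 else 0)
  have hfS := interpolant_vanish hw hT.1 h0 hf hfX
  obtain ⟨g, hg, hgf⟩ := exists_even_part hf
  have hg0 : evalPt (0 : Euc n) g = 1 := by
    have h := hgf 0
    rw [neg_zero, hfX 0 h0, if_pos rfl] at h
    linarith
  have hgS : ∀ y ∈ suppSpheres n X, y ≠ 0 → evalPt y g = 0 := by
    intro y hy hy0
    have hy' : -y ∈ suppSpheres n X := by
      rw [mem_suppSpheres] at hy ⊢
      simpa using hy
    have h := hgf y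
    rw [hfS y hy hy0, hfS (-y) hy' (neg_ne_zero.2 hy0)] at h
    linarith
  let i : Fin n := ⟨0, by omega⟩
  have hzero : MvPolynomial.X i * g = 0 := by
    refine eq_zero_of_vanish hdim
      ((MvPolynomial.totalDegree_mul _ _).trans ?_) fun y hy => ?_
    · rw [MvPolynomial.totalDegree_X]; omega
    · by_cases hy0 : y = 0
      · simp [evalPt, hy0]
      · have := hgS y hy hy0
        unfold evalPt at this ⊢
        rw [map_mul, this, mul_zero]
  rcases mul_eq_zero.1 hzero with h | h
  · exact MvPolynomial.X_ne_zero i h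
  · rw [h] at hg0
    simp [evalPt] at hg0

end
end

section
/- Let X be a finite nonempty subset of ℝⁿ with weight function w : X → ℝ_{>0}, and let t be a positive integer. Then (X, w) is a Euclidean t-design if and only if Σ_{u∈X} w(u)‖u‖^{2j} φ(u) = 0 for every harmonic homogeneous polynomial φ ∈ Harm_l(ℝⁿ) with 1 ≤ l ≤ t and every integer j with 0 ≤ j ≤ ⌊(t−l)/2⌋. -/
open MeasureTheory Metric Finset
open scoped Classical RealInnerProductSpace

noncomputable section

/-- The Laplacian `Δ = ∑ᵢ ∂²/∂xᵢ²` on polynomials, as a linear map. -/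
def lap (n : ℕ) : MvPolynomial (Fin n) ℝ →ₗ[ℝ] MvPolynomial (Fin n) ℝ :=
  ∑ i : Fin n, ((MvPolynomial.pderiv i).toLinearMap ∘ₗ (MvPolynomial.pderiv i).toLinearMap)

/-!
Write `ρ = ∑ Xᵢ²`. Both sides are statements about one linear functional, the defect
`D(p) = ∑_{x ∈ X} w(x) (A_{‖x‖}(p) - p(x))`, with `A_r` the average over the sphere of radius `r`:
the design property says that `D` vanishes in degree at most `t` (`designDefect`).

* Harmonic decomposition (`mem_radialHarmonicSpan`): polynomials of degree at most `t` are spanned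
  by the `ρ^j φ` with `φ` homogeneous harmonic of degree `l` and `l + 2j ≤ t`. This is an induction
  on the degree. By `Δ(ρ^{j+1} φ) = 2(j+1)(2j+2l+n) ρ^j φ`, the Laplacian of `p`, already
  decomposed, is the Laplacian of some decomposed `q`, and then `p - q` is harmonic.
* A homogeneous harmonic `φ` of degree `l ≥ 1` has average `0` on each sphere
  (`integral_harmonic`). Rotation invariance of Hausdorff measure, differentiated at the identity,
  shows that the integral kills the image of every `L_{ij} = Xᵢ ∂ⱼ - Xⱼ ∂ᵢ`. On the other hand
  `∑_{i,j} L_{ij}(Xᵢ ∂ⱼ φ) = ρ Δφ - l(l+n-2) φ`, which for `l ≥ 2` and `n ≥ 1` exhibits `φ` as a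
  sum of such images. Linear forms are treated by oddness.
* Constants are averaged correctly (`sphAvg_const`). This requires the sphere to have positive
  finite `(n-1)`-dimensional Hausdorff measure: it is covered by smooth images of the faces of a
  cube, and it projects onto a set containing a ball of a hyperplane.

Hence `D(ρ^j φ)` is `-∑ w(u) ‖u‖^{2j} φ(u)` if `l ≥ 1` and `0` if `l = 0`, and the equivalence
follows by linearity.
-/

/-! ### Harmonic decomposition of polynomials -/

section Algebra
open MvPolynomial

/-- The squared Euclidean norm `∑ Xᵢ²`, as a polynomial. -/
def normSqPoly (n : ℕ) : MvPolynomial (Fin n) ℝ := ∑ i, X i ^ 2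

lemma evalPt_normSqPoly {n : ℕ} (x : Euc n) : evalPt x (normSqPoly n) = ‖x‖ ^ 2 := by
  simp [evalPt, normSqPoly, EuclideanSpace.norm_sq_eq]

lemma normSqPoly_isHomogeneous (n : ℕ) : (normSqPoly n).IsHomogeneous 2 :=
  IsHomogeneous.sum _ _ _ fun i _ => isHomogeneous_X_pow i 2

lemma pderiv_normSqPoly {n : ℕ} (i : Fin n) : pderiv i (normSqPoly n) = 2 * X i := by
  simp [normSqPoly, pderiv_X, Pi.single_apply]

lemma lap_apply {n : ℕ} (p : MvPolynomial (Fin n) ℝ) :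
    lap n p = ∑ i, pderiv i (pderiv i p) := by
  simp [lap]

lemma lap_normSqPoly_mul {n m : ℕ} {q : MvPolynomial (Fin n) ℝ} (hq : q.IsHomogeneous m) :
    lap n (normSqPoly n * q) = normSqPoly n * lap n q + C (2 * n + 4 * m : ℝ) * q := by
  have e : ∑ i, X i * pderiv i q = m * q := by
    simpa using hq.sum_X_mul_pderiv
  have h : ∀ i : Fin n, pderiv i (pderiv i (normSqPoly n * q)) =
      normSqPoly n * pderiv i (pderiv i q) + 4 * (X i * pderiv i q) + 2 * q := by
    intro i
    have h2 : pderiv i (2 : MvPolynomial (Fin n) ℝ) = 0 := by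
      simpa using (pderiv (R := ℝ) i).map_natCast 2
    simp only [pderiv_mul, pderiv_normSqPoly, map_add, pderiv_X_self, h2]
    ring
  rw [lap_apply, lap_apply, Finset.sum_congr rfl fun i _ => h i]
  simp only [Finset.sum_add_distrib, ← Finset.mul_sum, e]
  simp [map_ofNat C 4, map_ofNat C 2]
  ring

lemma lap_normSqPoly_pow_mul {n l : ℕ} {φ : MvPolynomial (Fin n) ℝ} (hφ : φ.IsHomogeneous l)
    (h0 : lap n φ = 0) (j : ℕ) :
    lap n (normSqPoly n ^ (j + 1) * φ) =
      C (2 * (j + 1) * (2 * j + 2 * l + n) : ℝ) * (normSqPoly n ^ j * φ) := by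
  induction j with
  | zero =>
    rw [zero_add, pow_one, lap_normSqPoly_mul hφ, h0]
    simp only [mul_zero, zero_add, pow_zero, one_mul]
    congr 2
    push_cast
    ring
  | succ j ih =>
    rw [pow_succ' _ (j + 1), mul_assoc,
      lap_normSqPoly_mul (((normSqPoly_isHomogeneous n).pow (j + 1)).mul hφ), ih]
    push_cast
    simp only [map_add, map_mul, map_natCast, map_ofNat, map_one]
    ring

/-- The span of the polynomials `‖x‖^{2j} φ` of degree `d` with `φ` homogeneous harmonic. -/
def radialHarmonicSpan (n d : ℕ) : Submodule ℝ (MvPolynomial (Fin n) ℝ) :=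
  Submodule.span ℝ {p | ∃ (l j : ℕ) (φ : MvPolynomial (Fin n) ℝ), φ.IsHomogeneous l ∧
    lap n φ = 0 ∧ l + 2 * j = d ∧ p = normSqPoly n ^ j * φ}

lemma harmonic_mem_radialHarmonicSpan {n d : ℕ} {p : MvPolynomial (Fin n) ℝ}
    (hp : p.IsHomogeneous d) (h0 : lap n p = 0) : p ∈ radialHarmonicSpan n d :=
  Submodule.subset_span ⟨d, 0, p, hp, h0, rfl, by simp⟩

lemma radialHarmonicSpan_isHomogeneous {n d : ℕ} {p : MvPolynomial (Fin n) ℝ}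
    (hp : p ∈ radialHarmonicSpan n d) : p.IsHomogeneous d := by
  have : radialHarmonicSpan n d ≤ homogeneousSubmodule (Fin n) ℝ d := by
    refine Submodule.span_le.2 ?_
    rintro p ⟨l, j, φ, hφ, -, hd, rfl⟩
    have := ((normSqPoly_isHomogeneous n).pow j).mul hφ
    rwa [add_comm, hd] at this
  exact this hp

/-- On radial-harmonic combinations the Laplacian has an explicit right inverse:
`‖x‖^{2j} φ` is a nonzero multiple of `Δ(‖x‖^{2(j+1)} φ)`. -/
lemma exists_lap_eq {n d : ℕ} (hn : 0 < n) {p : MvPolynomial (Fin n) ℝ}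
    (hp : p ∈ radialHarmonicSpan n d) : ∃ q ∈ radialHarmonicSpan n (d + 2), lap n q = p := by
  have : radialHarmonicSpan n d ≤ (radialHarmonicSpan n (d + 2)).map (lap n) := by
    refine Submodule.span_le.2 ?_
    rintro p ⟨l, j, φ, hφ, h0, hd, rfl⟩
    have hc : (2 * (j + 1) * (2 * j + 2 * l + n) : ℝ) ≠ 0 := by positivity
    refine ⟨(2 * (j + 1) * (2 * j + 2 * l + n) : ℝ)⁻¹ • (normSqPoly n ^ (j + 1) * φ),
      Submodule.smul_mem _ _ (Submodule.subset_span ⟨l, j + 1, φ, hφ, h0, by omega, rfl⟩), ?_⟩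
    rw [map_smul, lap_normSqPoly_pow_mul hφ h0, ← smul_eq_C_mul, smul_smul, inv_mul_cancel₀ hc,
      one_smul]
  exact this hp

/-- A homogeneous polynomial of degree at most one is harmonic. -/
lemma lap_eq_zero_of_le_one {n d : ℕ} (hd : d ≤ 1) {p : MvPolynomial (Fin n) ℝ}
    (hp : p.IsHomogeneous d) : lap n p = 0 := by
  rw [lap_apply]
  refine Finset.sum_eq_zero fun i _ => ?_
  have h1 : (pderiv i p).IsHomogeneous 0 := by
    have := hp.pderiv (i := i)
    rwa [Nat.sub_eq_zero_of_le hd] at this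
  rw [← totalDegree_zero_iff_isHomogeneous, totalDegree_eq_zero_iff_eq_C] at h1
  rw [h1, pderiv_C]

lemma isHomogeneous_lap {n d : ℕ} {p : MvPolynomial (Fin n) ℝ}
    (hp : p.IsHomogeneous (d + 2)) : (lap n p).IsHomogeneous d := by
  rw [lap_apply]
  exact IsHomogeneous.sum _ _ _ fun i _ => (hp.pderiv (i := i)).pderiv

/-- Harmonic decomposition: every homogeneous polynomial of degree `d` is a linear combination of
products `‖x‖^{2j} φ` with `φ` homogeneous harmonic of degree `d - 2j`. -/
lemma mem_radialHarmonicSpan {n : ℕ} (d : ℕ) : ∀ {p : MvPolynomial (Fin n) ℝ},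
    p.IsHomogeneous d → p ∈ radialHarmonicSpan n d := by
  induction d using Nat.strong_induction_on with
  | _ d ih =>
    intro p hp
    rcases Nat.eq_zero_or_pos n with rfl | hn
    · exact harmonic_mem_radialHarmonicSpan hp (by simp [lap])
    rcases Nat.lt_or_ge 1 d with hd | hd
    · obtain ⟨d, rfl⟩ := Nat.exists_eq_add_of_le' hd
      obtain ⟨q, hq, hqp⟩ := exists_lap_eq hn (ih d (by omega) (isHomogeneous_lap hp))
      have : p - q ∈ radialHarmonicSpan n (d + 2) :=
        harmonic_mem_radialHarmonicSpan (hp.sub (radialHarmonicSpan_isHomogeneous hq))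
          (by rw [map_sub, hqp, sub_self])
      simpa using Submodule.add_mem _ this hq
    · exact harmonic_mem_radialHarmonicSpan hp (lap_eq_zero_of_le_one hd hp)

/-- The derivation `Xᵢ ∂ⱼ - Xⱼ ∂ᵢ`, the infinitesimal rotation in the `(i, j)` coordinate plane. -/
def rotDeriv {n : ℕ} (i j : Fin n) :
    Derivation ℝ (MvPolynomial (Fin n) ℝ) (MvPolynomial (Fin n) ℝ) :=
  (X i : MvPolynomial (Fin n) ℝ) • pderiv j - (X j : MvPolynomial (Fin n) ℝ) • pderiv i

/-- Summing infinitesimal rotations of `Xᵢ ∂ⱼ φ` is the Casimir operator up to a constant. On a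
harmonic form of degree `l` it acts as the scalar `-l(l+n-2)`. -/
lemma sum_rotDeriv {n l : ℕ} (hl : 1 ≤ l) {φ : MvPolynomial (Fin n) ℝ} (hφ : φ.IsHomogeneous l)
    (h0 : lap n φ = 0) :
    ∑ i, ∑ j, rotDeriv i j (X i * pderiv j φ) = C (-(l * (l + n - 2)) : ℝ) * φ := by
  have e : ∑ i, X i * pderiv i φ = l * φ := by
    simpa using hφ.sum_X_mul_pderiv
  have e2 : ∀ j : Fin n, ∑ i, X i * pderiv i (pderiv j φ) = (l - 1) * pderiv j φ := by
    intro j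
    simpa [Nat.cast_sub hl] using (hφ.pderiv (i := j)).sum_X_mul_pderiv
  have h : ∀ i j : Fin n, rotDeriv i j (X i * pderiv j φ) =
      (if i = j then X i * pderiv j φ else 0) + X i ^ 2 * pderiv j (pderiv j φ)
        - X j * pderiv j φ - X j * (X i * pderiv i (pderiv j φ)) := by
    intro i j
    simp only [rotDeriv, Derivation.sub_apply, Derivation.smul_apply, smul_eq_mul, pderiv_mul,
      pderiv_X, Pi.single_apply]
    split_ifs <;> simp_all <;> ring
  simp only [h, Finset.sum_add_distrib, Finset.sum_sub_distrib, ← Finset.mul_sum,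
    Finset.sum_ite_eq, Finset.mem_univ, if_true, e, ← lap_apply, h0]
  rw [Finset.sum_comm]
  simp only [← Finset.mul_sum, e2]
  have : ∀ j : Fin n, X j * (((l : MvPolynomial (Fin n) ℝ) - 1) * pderiv j φ)
    = ((l : MvPolynomial (Fin n) ℝ) - 1) * (X j * pderiv j φ) := fun j => by ring
  simp only [this, ← Finset.mul_sum, e]
  simp [map_ofNat C 2]
  ring

end Algebra

/-! ### Hausdorff measure of spheres -/

section SphereMeasure
open Set

/-- The radial projection onto the sphere of radius `r` of the hyperplane `{xᵢ = s}`. -/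
def faceChart {m : ℕ} (r s : ℝ) (i : Fin (m + 1)) (y : Fin m → ℝ) : Euc (m + 1) :=
  (r / ‖(WithLp.toLp 2 (i.insertNth s y : Fin (m + 1) → ℝ) : Euc (m + 1))‖) •
    WithLp.toLp 2 (i.insertNth s y : Fin (m + 1) → ℝ)

lemma toLp_insertNth_ne_zero {m : ℕ} {s : ℝ} (hs : s ≠ 0) (i : Fin (m + 1)) (y : Fin m → ℝ) :
    (WithLp.toLp 2 (i.insertNth s y : Fin (m + 1) → ℝ) : Euc (m + 1)) ≠ 0 := by
  intro h
  have := congrArg (fun v : Euc (m + 1) => v i) h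
  simp at this
  exact hs this

lemma contDiff_faceChart {m : ℕ} (r : ℝ) {s : ℝ} (hs : s ≠ 0) (i : Fin (m + 1)) :
    ContDiff ℝ 1 (faceChart r s i) := by
  have h : ContDiff ℝ 1 (fun y : Fin m → ℝ =>
      (WithLp.toLp 2 (i.insertNth s y : Fin (m + 1) → ℝ) : Euc (m + 1))) := by
    rw [contDiff_euclidean]
    intro k
    refine Fin.succAboveCases i ?_ (fun k => ?_) k
    · simpa using contDiff_const
    · simpa using contDiff_apply ℝ ℝ k
  exact (contDiff_const.div (h.norm ℝ fun y => toLp_insertNth_ne_zero hs i y)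
    fun y => norm_ne_zero_iff.2 (toLp_insertNth_ne_zero hs i y)).smul h

/-- The sphere is covered by the radial projections of the faces of the cube `[-1, 1]^(m+1)`. -/
lemma sphere_subset_iUnion_faceChart {m : ℕ} {r : ℝ} (hr : 0 < r) :
    sphere (0 : Euc (m + 1)) r ⊆
      ⋃ i : Fin (m + 1), (faceChart r 1 i '' Icc (-1) 1 ∪ faceChart r (-1) i '' Icc (-1) 1) := by
  intro x hx
  have hxr : ‖x‖ = r := by simpa using hx
  obtain ⟨i, -, hi⟩ := Finset.exists_max_image Finset.univ (fun k => |x k|) Finset.univ_nonempty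
  have hi0 : 0 < |x i| := by
    rw [abs_pos]
    intro h0
    have : x = 0 := by
      ext k
      have := hi k (Finset.mem_univ k)
      rw [h0, abs_zero] at this
      simpa using this
    rw [this, norm_zero] at hxr
    exact hr.ne hxr
  have key : ∀ s : ℝ, x i / |x i| = s →
      x ∈ faceChart r s i '' Icc (-1) 1 := by
    intro s hs
    refine ⟨fun k => x (i.succAbove k) / |x i|, ⟨fun k => ?_, fun k => ?_⟩, ?_⟩
    · have := neg_abs_le (x (i.succAbove k))
      have h2 := hi (i.succAbove k) (Finset.mem_univ _)
      simp only [Pi.neg_apply, Pi.one_apply]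
      rw [le_div_iff₀ hi0]
      linarith
    · have := le_abs_self (x (i.succAbove k))
      have h2 := hi (i.succAbove k) (Finset.mem_univ _)
      simp only [Pi.one_apply]
      rw [div_le_iff₀ hi0]
      linarith
    · have : (WithLp.toLp 2 (i.insertNth s (fun k => x (i.succAbove k) / |x i|) :
          Fin (m + 1) → ℝ) : Euc (m + 1)) = |x i|⁻¹ • x := by
        ext k
        refine Fin.succAboveCases i ?_ (fun k => ?_) k
        · simp [← hs, div_eq_inv_mul]
        · simp [div_eq_inv_mul]
      rw [faceChart, this, norm_smul, hxr, smul_smul, norm_inv, Real.norm_eq_abs, abs_abs]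
      field_simp
      simp
  refine mem_iUnion.2 ⟨i, ?_⟩
  rcases abs_choice (x i) with h | h
  · exact Or.inl (key 1 (by rw [h, div_self]; rintro h0; simp [h0] at hi0))
  · exact Or.inr (key (-1) (by rw [h, div_neg, div_self]; rintro h0; simp [h0] at hi0))

lemma hausdorffMeasure_fin_pi (m : ℕ) : (μH[(m : ℝ)] : Measure (Fin m → ℝ)) = volume := by
  simpa using hausdorffMeasure_pi_real (ι := Fin m)

lemma hausdorffMeasure_sphere_lt_top {m : ℕ} {r : ℝ} (hr : 0 < r) :
    μH[(m : ℝ)] (sphere (0 : Euc (m + 1)) r) < ⊤ := by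
  have face : ∀ (s : ℝ), s ≠ 0 → ∀ i : Fin (m + 1),
      μH[(m : ℝ)] (faceChart r s i '' Icc (-1) 1) < ⊤ := by
    intro s hs i
    obtain ⟨K, hK⟩ := (contDiff_faceChart r hs i).contDiffOn.exists_lipschitzOnWith one_ne_zero
      (convex_Icc (-1 : Fin m → ℝ) 1) isCompact_Icc
    refine (hK.hausdorffMeasure_image_le m.cast_nonneg).trans_lt ?_
    rw [hausdorffMeasure_fin_pi]
    exact ENNReal.mul_lt_top (ENNReal.rpow_lt_top_of_nonneg m.cast_nonneg ENNReal.coe_ne_top)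
      isCompact_Icc.measure_lt_top
  refine (measure_mono (sphere_subset_iUnion_faceChart hr)).trans_lt ?_
  refine (measure_iUnion_le _).trans_lt ?_
  rw [tsum_fintype]
  refine ENNReal.sum_lt_top.2 fun i _ => (measure_union_le _ _).trans_lt ?_
  exact ENNReal.add_lt_top.2 ⟨face 1 one_ne_zero i, face (-1) (by norm_num) i⟩

/-- Forgetting a coordinate is `1`-Lipschitz and maps the sphere onto a set containing a ball. -/
lemma hausdorffMeasure_sphere_pos {m : ℕ} {r : ℝ} (hr : 0 < r) :
    0 < μH[(m : ℝ)] (sphere (0 : Euc (m + 1)) r) := by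
  set π : Euc (m + 1) → (Fin m → ℝ) := fun x k => x k.succ with hπ
  have hL : LipschitzWith 1 π := by
    refine LipschitzWith.of_dist_le_mul fun x y => ?_
    rw [NNReal.coe_one, one_mul, dist_pi_le_iff dist_nonneg]
    intro k
    rw [dist_eq_norm x y, Real.dist_eq]
    simpa using PiLp.norm_apply_le (x - y) k.succ
  set U : Set (Fin m → ℝ) := {y | ∑ k, y k ^ 2 < r ^ 2} with hU
  have hUo : IsOpen U := isOpen_lt (by fun_prop) continuous_const
  have hUn : U.Nonempty := ⟨0, by simp [hU, hr]⟩
  have hsub : U ⊆ π '' sphere (0 : Euc (m + 1)) r := by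
    intro y hy
    refine ⟨WithLp.toLp 2 (Fin.cons (√(r ^ 2 - ∑ k, y k ^ 2)) y), ?_, ?_⟩
    · rw [mem_sphere_zero_iff_norm, ← sq_eq_sq₀ (norm_nonneg _) hr.le, EuclideanSpace.norm_sq_eq,
        Fin.sum_univ_succ]
      simp [Real.sq_sqrt (sub_nonneg.2 (le_of_lt hy))]
    · ext k
      simp [hπ]
  have h1 := hL.hausdorffMeasure_image_le m.cast_nonneg (sphere (0 : Euc (m + 1)) r)
  rw [ENNReal.coe_one, ENNReal.one_rpow, one_mul, hausdorffMeasure_fin_pi] at h1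
  exact ((hUo.measure_pos volume hUn).trans_le (measure_mono hsub)).trans_le h1

end SphereMeasure

/-! ### Integrals of harmonic polynomials over spheres -/

section SphereIntegral

/-- The (unnormalized) surface measure on the sphere of radius `r`, as a measure on `ℝⁿ`. -/
def sphMeasure (n : ℕ) (r : ℝ) : Measure (Euc n) :=
  (μH[(n : ℝ) - 1] : Measure (Euc n)).restrict (sphere 0 r)

lemma sphere_euc_zero {r : ℝ} (hr : 0 < r) : sphere (0 : Euc 0) r = ∅ := by
  ext x
  simp [Subsingleton.elim x 0, hr.ne]

lemma isFiniteMeasure_sphMeasure (n : ℕ) {r : ℝ} (hr : 0 < r) :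
    IsFiniteMeasure (sphMeasure n r) := by
  refine ⟨?_⟩
  rw [sphMeasure, Measure.restrict_apply_univ]
  cases n with
  | zero => simp [sphere_euc_zero hr]
  | succ m => simpa using hausdorffMeasure_sphere_lt_top (m := m) hr

lemma evalPt_sum {n : ℕ} {ι : Type*} (s : Finset ι) (x : Euc n)
    (p : ι → MvPolynomial (Fin n) ℝ) : evalPt x (∑ i ∈ s, p i) = ∑ i ∈ s, evalPt x (p i) :=
  map_sum _ _ _

lemma evalPt_C_mul {n : ℕ} (x : Euc n) (c : ℝ) (p : MvPolynomial (Fin n) ℝ) :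
    evalPt x (MvPolynomial.C c * p) = c * evalPt x p := by
  simp [evalPt]

lemma continuous_evalPt {n : ℕ} (p : MvPolynomial (Fin n) ℝ) :
    Continuous fun x : Euc n => evalPt x p :=
  (MvPolynomial.continuous_eval p).comp (by fun_prop)

lemma ae_mem_sphere (n : ℕ) (r : ℝ) : ∀ᵐ x ∂sphMeasure n r, x ∈ sphere (0 : Euc n) r :=
  ae_restrict_mem isClosed_sphere.measurableSet

lemma integrable_evalPt {n : ℕ} {r : ℝ} (hr : 0 < r) (p : MvPolynomial (Fin n) ℝ) :
    Integrable (fun x : Euc n => evalPt x p) (sphMeasure n r) := by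
  have := isFiniteMeasure_sphMeasure n hr
  obtain ⟨C, hC⟩ := (isCompact_sphere (0 : Euc n) r).exists_bound_of_continuousOn
    (continuous_evalPt p).continuousOn
  exact Integrable.of_bound (continuous_evalPt p).aestronglyMeasurable C
    ((ae_mem_sphere n r).mono hC)

lemma integral_comp_linearIsometryEquiv {n : ℕ} (r : ℝ) (e : Euc n ≃ₗᵢ[ℝ] Euc n)
    (f : Euc n → ℝ) : ∫ x, f (e x) ∂sphMeasure n r = ∫ x, f x ∂sphMeasure n r := by
  have h := (e.toIsometryEquiv.measurePreserving_hausdorffMeasure ((n : ℝ) - 1))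
    |>.setIntegral_preimage_emb e.toHomeomorph.measurableEmbedding f (sphere 0 r)
  have hs : e.toIsometryEquiv ⁻¹' sphere 0 r = sphere (0 : Euc n) r := by
    ext x
    simp
  rw [hs] at h
  exact h

/-- The rotation by the angle `θ` in the `(i, j)` coordinate plane. -/
def planeRotFun {n : ℕ} (i j : Fin n) (θ : ℝ) (x : Euc n) : Euc n :=
  WithLp.toLp 2 fun k => if k = i then Real.cos θ * x i - Real.sin θ * x j
    else if k = j then Real.sin θ * x i + Real.cos θ * x j else x k

lemma norm_planeRotFun {n : ℕ} {i j : Fin n} (hij : i ≠ j) (θ : ℝ) (x : Euc n) :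
    ‖planeRotFun i j θ x‖ = ‖x‖ := by
  rw [← sq_eq_sq₀ (norm_nonneg _) (norm_nonneg _), EuclideanSpace.norm_sq_eq,
    EuclideanSpace.norm_sq_eq]
  have hj : j ∈ Finset.univ.erase i := by simp [hij.symm]
  rw [← Finset.add_sum_erase _ _ (Finset.mem_univ i), ← Finset.add_sum_erase _ _ hj,
    ← Finset.add_sum_erase Finset.univ (fun k => ‖x k‖ ^ 2) (Finset.mem_univ i),
    ← Finset.add_sum_erase (Finset.univ.erase i) (fun k => ‖x k‖ ^ 2) hj,
    ← add_assoc, ← add_assoc]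
  congr 1
  · simp only [planeRotFun, if_true, hij.symm, if_false, Real.norm_eq_abs, sq_abs]
    linear_combination (x i ^ 2 + x j ^ 2) * Real.sin_sq_add_cos_sq θ
  · refine Finset.sum_congr rfl fun k hk => ?_
    simp only [Finset.mem_erase] at hk
    simp [planeRotFun, hk.1, hk.2.1]

/-- `planeRotFun` as a linear isometry. -/
def planeRot {n : ℕ} {i j : Fin n} (hij : i ≠ j) (θ : ℝ) : Euc n ≃ₗᵢ[ℝ] Euc n :=
  LinearIsometry.toLinearIsometryEquiv
    { toFun := planeRotFun i j θ
      map_add' := fun x y => by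
        ext k
        simp only [planeRotFun, PiLp.add_apply]
        split_ifs <;> ring
      map_smul' := fun c x => by
        ext k
        simp only [planeRotFun, PiLp.smul_apply, smul_eq_mul, RingHom.id_apply]
        split_ifs <;> ring
      norm_map' := norm_planeRotFun hij θ } rfl

lemma planeRot_apply {n : ℕ} {i j : Fin n} (hij : i ≠ j) (θ : ℝ) (x : Euc n) :
    planeRot hij θ x = planeRotFun i j θ x := rfl

/-- If every coordinate of a curve flows along the derivation `D`, so does every polynomial. -/
lemma hasDerivAt_evalPt {n : ℕ} {γ : ℝ → Euc n} {θ : ℝ}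
    (D : Derivation ℝ (MvPolynomial (Fin n) ℝ) (MvPolynomial (Fin n) ℝ))
    (h : ∀ k, HasDerivAt (fun s => γ s k) (evalPt (γ θ) (D (MvPolynomial.X k))) θ)
    (p : MvPolynomial (Fin n) ℝ) :
    HasDerivAt (fun s => evalPt (γ s) p) (evalPt (γ θ) (D p)) θ := by
  induction p using MvPolynomial.induction_on with
  | C a => simpa [evalPt, MvPolynomial.derivation_C] using hasDerivAt_const θ a
  | add p q hp hq => simpa [evalPt] using hp.fun_add hq
  | mul_X p k hp =>
    have := hp.fun_mul (h k)
    simp only [evalPt, map_mul, MvPolynomial.eval_X, Derivation.leibniz, map_add, smul_eq_mul]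
      at this ⊢
    exact this.congr_deriv (by ring)

lemma hasDerivAt_planeRot {n : ℕ} {i j : Fin n} (hij : i ≠ j) (x : Euc n)
    (p : MvPolynomial (Fin n) ℝ) (θ : ℝ) :
    HasDerivAt (fun s => evalPt (planeRot hij s x) p)
      (evalPt (planeRot hij θ x) (rotDeriv i j p)) θ := by
  refine hasDerivAt_evalPt (rotDeriv i j) (fun k => ?_) p
  have hc := Real.hasDerivAt_cos θ
  have hs := Real.hasDerivAt_sin θ
  simp only [planeRot_apply]
  rcases eq_or_ne k i with rfl | hki
  · have hf : (fun s => planeRotFun k j s x k) =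
        fun s => Real.cos s * x k - Real.sin s * x j := by
      funext s; simp [planeRotFun]
    rw [hf]
    refine ((hc.mul_const (x k)).fun_sub (hs.mul_const (x j))).congr_deriv ?_
    simp [evalPt, rotDeriv, planeRotFun, MvPolynomial.pderiv_X, hij, hij.symm]
    ring
  rcases eq_or_ne k j with rfl | hkj
  · have hf : (fun s => planeRotFun i k s x k) =
        fun s => Real.sin s * x i + Real.cos s * x k := by
      funext s; simp [planeRotFun, hki]
    rw [hf]
    refine ((hs.mul_const (x i)).fun_add (hc.mul_const (x k))).congr_deriv ?_
    simp [evalPt, rotDeriv, planeRotFun, MvPolynomial.pderiv_X, hij]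
    ring
  · have hf : (fun s => planeRotFun i j s x k) = fun _ => x k := by
      funext s; simp [planeRotFun, hki, hkj]
    rw [hf]
    refine (hasDerivAt_const θ (x k)).congr_deriv ?_
    simp [evalPt, rotDeriv, MvPolynomial.pderiv_X, hki.symm, hkj.symm]

/-- The integral over the sphere kills infinitesimal rotations: it is the derivative at `0` of the
constant function `θ ↦ ∫ p(R_θ x)`. -/
lemma integral_rotDeriv {n : ℕ} {r : ℝ} (hr : 0 < r) (i j : Fin n)
    (p : MvPolynomial (Fin n) ℝ) :
    ∫ x, evalPt x (rotDeriv i j p) ∂sphMeasure n r = 0 := by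
  rcases eq_or_ne i j with rfl | hij
  · simp [rotDeriv, evalPt]
  have := isFiniteMeasure_sphMeasure n hr
  obtain ⟨C, hC⟩ := (isCompact_sphere (0 : Euc n) r).exists_bound_of_continuousOn
    (continuous_evalPt (rotDeriv i j p)).continuousOn
  obtain ⟨C', hC'⟩ := (isCompact_sphere (0 : Euc n) r).exists_bound_of_continuousOn
    (continuous_evalPt p).continuousOn
  have cont : ∀ (q : MvPolynomial (Fin n) ℝ) (θ : ℝ),
      Continuous fun x => evalPt (planeRot hij θ x) q :=
    fun q θ => (continuous_evalPt q).comp (planeRot hij θ).continuous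
  have hconst : ∀ (q : MvPolynomial (Fin n) ℝ) (θ : ℝ),
      ∫ x, evalPt (planeRot hij θ x) q ∂sphMeasure n r = ∫ x, evalPt x q ∂sphMeasure n r :=
    fun q θ => integral_comp_linearIsometryEquiv r (planeRot hij θ) fun x => evalPt x q
  have key := (hasDerivAt_integral_of_dominated_loc_of_deriv_le (μ := sphMeasure n r)
    (F := fun θ x => evalPt (planeRot hij θ x) p)
    (F' := fun θ x => evalPt (planeRot hij θ x) (rotDeriv i j p)) (x₀ := (0 : ℝ))
    (bound := fun _ => C) (s := Set.univ) Filter.univ_mem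
    (Filter.Eventually.of_forall fun θ => (cont p θ).aestronglyMeasurable)
    (Integrable.of_bound (cont p 0).aestronglyMeasurable C'
      ((ae_mem_sphere n r).mono fun x hx => hC' _ (by simpa using hx))) (cont _ 0).aestronglyMeasurable
    ((ae_mem_sphere n r).mono fun x hx θ _ => hC _ (by simpa using hx))
    (integrable_const C)
    (Filter.Eventually.of_forall fun x θ _ => hasDerivAt_planeRot hij x p θ)).2
  simp only [hconst] at key
  exact key.unique (hasDerivAt_const _ _)

/-- A harmonic form of positive degree has mean zero over every sphere centred at the origin. -/
lemma integral_harmonic {n l : ℕ} {r : ℝ} (hr : 0 < r) (hl : 1 ≤ l)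
    {φ : MvPolynomial (Fin n) ℝ} (hφ : φ.IsHomogeneous l) (h0 : lap n φ = 0) :
    ∫ x, evalPt x φ ∂sphMeasure n r = 0 := by
  rcases hl.eq_or_lt with rfl | hl2
  · -- The Casimir eigenvalue vanishes for `n = l = 1`; linear forms are odd instead.
    have hneg : ∀ x : Euc n, evalPt (-x) φ = -evalPt x φ := by
      have hd : ∀ i, ∃ c, MvPolynomial.pderiv i φ = MvPolynomial.C c := fun i =>
        ⟨_, MvPolynomial.totalDegree_eq_zero_iff_eq_C.1
          ((MvPolynomial.totalDegree_zero_iff_isHomogeneous _).2 (hφ.pderiv (i := i)))⟩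
      choose c hc using hd
      have he := hφ.sum_X_mul_pderiv
      simp only [hc, one_smul] at he
      intro x
      simp [← he, evalPt]
    have := integral_comp_linearIsometryEquiv r (LinearIsometryEquiv.neg ℝ (E := Euc n))
      (fun x => evalPt x φ)
    simp only [LinearIsometryEquiv.coe_neg, hneg, integral_neg] at this
    linarith
  · have h := congrArg (fun p => ∫ x, evalPt x p ∂sphMeasure n r) (sum_rotDeriv hl hφ h0)
    simp only [evalPt_sum, evalPt_C_mul, integral_const_mul] at h
    rw [integral_finsetSum _ fun i _ => integrable_finsetSum _ fun j _ =>
      integrable_evalPt hr _] at h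
    rw [Finset.sum_eq_zero fun i _ => ?_] at h
    · have hl' : (2 : ℝ) ≤ l := by exact_mod_cast hl2
      rcases Nat.eq_zero_or_pos n with rfl | hn
      · simp [sphMeasure, sphere_euc_zero hr]
      have hn' : (1 : ℝ) ≤ n := by exact_mod_cast hn
      have : (-(l * (l + n - 2)) : ℝ) ≠ 0 := by
        have : (0 : ℝ) < l * (l + n - 2) := by
          apply mul_pos <;> linarith
        linarith
      exact (mul_eq_zero.1 h.symm).resolve_left this
    · rw [integral_finsetSum _ fun j _ => integrable_evalPt hr _]
      exact Finset.sum_eq_zero fun j _ => integral_rotDeriv hr i j _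

end SphereIntegral

/-! ### Spherical averages and the defect functional -/

section Average

lemma sphAvg_of_pos {n : ℕ} {r : ℝ} (hr : 0 < r) (f : Euc n → ℝ) :
    sphAvg n r f = ((sphMeasure n r).real Set.univ)⁻¹ * ∫ x, f x ∂sphMeasure n r := by
  rw [sphAvg, if_neg hr.ne', average_eq, smul_eq_mul, sphMeasure]

lemma sphAvg_zero_radius {n : ℕ} (f : Euc n → ℝ) : sphAvg n 0 f = f 0 := if_pos rfl

/-- The average over the sphere through `x` is normalized: the surface measure of a sphere of
positive radius in positive dimension is neither `0` nor `∞`. -/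
lemma sphAvg_const {n : ℕ} (x : Euc n) (c : ℝ) : sphAvg n ‖x‖ (fun _ => c) = c := by
  rcases (norm_nonneg x).eq_or_lt with h | h
  · rw [← h, sphAvg_zero_radius]
  cases n with
  | zero => simp [Subsingleton.elim x 0] at h
  | succ m =>
    rw [sphAvg, if_neg h.ne']
    have e : ((m + 1 : ℕ) : ℝ) - 1 = m := by simp
    rw [e]
    exact setAverage_const (hausdorffMeasure_sphere_pos h).ne'
      (hausdorffMeasure_sphere_lt_top h).ne c

lemma evalPt_normSqPoly_pow_mul {n : ℕ} (x : Euc n) (j : ℕ) (φ : MvPolynomial (Fin n) ℝ) :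
    evalPt x (normSqPoly n ^ j * φ) = ‖x‖ ^ (2 * j) * evalPt x φ := by
  have h := evalPt_normSqPoly x
  simp only [evalPt, map_mul, map_pow] at h ⊢
  rw [h, pow_mul]

lemma sphAvg_normSqPoly_pow_mul {n : ℕ} {r : ℝ} (hr : 0 ≤ r) (j : ℕ)
    (φ : MvPolynomial (Fin n) ℝ) :
    sphAvg n r (fun y => evalPt y (normSqPoly n ^ j * φ)) =
      r ^ (2 * j) * sphAvg n r (fun y => evalPt y φ) := by
  rcases hr.eq_or_lt with rfl | h
  · simp only [sphAvg_zero_radius, evalPt_normSqPoly_pow_mul, norm_zero]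
  · have e : ∫ x, evalPt x (normSqPoly n ^ j * φ) ∂sphMeasure n r =
        ∫ x, r ^ (2 * j) * evalPt x φ ∂sphMeasure n r := by
      refine integral_congr_ae ((ae_mem_sphere n r).mono fun x hx => ?_)
      simp only [evalPt_normSqPoly_pow_mul, mem_sphere_zero_iff_norm.1 hx]
    rw [sphAvg_of_pos h, sphAvg_of_pos h, e, integral_const_mul, mul_left_comm]

lemma sphAvg_harmonic {n l : ℕ} {r : ℝ} (hr : 0 ≤ r) (hl : 1 ≤ l)
    {φ : MvPolynomial (Fin n) ℝ} (hφ : φ.IsHomogeneous l) (h0 : lap n φ = 0) :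
    sphAvg n r (fun y => evalPt y φ) = 0 := by
  rcases hr.eq_or_lt with rfl | h
  · have := congrArg (evalPt 0) hφ.sum_X_mul_pderiv
    simp only [evalPt, map_sum, map_mul, MvPolynomial.eval_X, PiLp.zero_apply, zero_mul,
      Finset.sum_const_zero, map_nsmul] at this
    rw [sphAvg_zero_radius]
    have h2 := (smul_eq_zero.1 this.symm).resolve_left (by omega)
    simpa [evalPt] using h2
  · rw [sphAvg_of_pos h, integral_harmonic h hl hφ h0, mul_zero]

lemma sphAvg_add {n : ℕ} {r : ℝ} (hr : 0 ≤ r) (p q : MvPolynomial (Fin n) ℝ) :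
    sphAvg n r (fun y => evalPt y (p + q)) =
      sphAvg n r (fun y => evalPt y p) + sphAvg n r (fun y => evalPt y q) := by
  have e : ∀ y : Euc n, evalPt y (p + q) = evalPt y p + evalPt y q := fun y => map_add _ _ _
  simp only [e]
  rcases hr.eq_or_lt with rfl | h
  · simp only [sphAvg_zero_radius]
  · simp only [sphAvg_of_pos h]
    rw [integral_add (integrable_evalPt h p) (integrable_evalPt h q), mul_add]

lemma sphAvg_smul {n : ℕ} {r : ℝ} (hr : 0 ≤ r) (c : ℝ) (p : MvPolynomial (Fin n) ℝ) :
    sphAvg n r (fun y => evalPt y (c • p)) = c * sphAvg n r (fun y => evalPt y p) := by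
  simp only [MvPolynomial.smul_eq_C_mul, evalPt_C_mul]
  rcases hr.eq_or_lt with rfl | h
  · simp only [sphAvg_zero_radius]
  · simp only [sphAvg_of_pos h]
    rw [integral_const_mul, mul_left_comm]

/-- The defect of the design identity, as a linear functional on polynomials. The spherical
averages are summed over the points of `X` rather than over the spheres supporting `X`. -/
def designDefect (n : ℕ) (X : Finset (Euc n)) (w : Euc n → ℝ) :
    MvPolynomial (Fin n) ℝ →ₗ[ℝ] ℝ where
  toFun p := ∑ x ∈ X, w x * (sphAvg n ‖x‖ (fun y => evalPt y p) - evalPt x p)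
  map_add' p q := by
    rw [← Finset.sum_add_distrib]
    refine Finset.sum_congr rfl fun x _ => ?_
    have e : evalPt x (p + q) = evalPt x p + evalPt x q := map_add _ _ _
    rw [sphAvg_add (norm_nonneg x), e]
    ring
  map_smul' c p := by
    rw [RingHom.id_apply, smul_eq_mul, Finset.mul_sum]
    refine Finset.sum_congr rfl fun x _ => ?_
    rw [sphAvg_smul (norm_nonneg x), MvPolynomial.smul_eq_C_mul, evalPt_C_mul]
    ring

lemma isEuclideanDesign_iff_designDefect {n t : ℕ} {X : Finset (Euc n)} {w : Euc n → ℝ} :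
    IsEuclideanDesign n t X w ↔
      ∀ p : MvPolynomial (Fin n) ℝ, p.totalDegree ≤ t → designDefect n X w p = 0 := by
  refine forall₂_congr fun p _ => ?_
  have h : ∑ r ∈ X.image (fun x => ‖x‖),
      (∑ x ∈ X.filter (fun x => ‖x‖ = r), w x) * sphAvg n r (fun y => evalPt y p) =
      ∑ x ∈ X, w x * sphAvg n ‖x‖ (fun y => evalPt y p) := by
    rw [← Finset.sum_fiberwise_of_maps_to (g := fun x => ‖x‖) (t := X.image fun x => ‖x‖)
      fun x hx => Finset.mem_image_of_mem _ hx]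
    refine Finset.sum_congr rfl fun r _ => ?_
    rw [Finset.sum_mul]
    refine Finset.sum_congr rfl fun x hx => ?_
    rw [(Finset.mem_filter.1 hx).2]
  rw [h, ← sub_eq_zero, ← Finset.sum_sub_distrib]
  simp only [designDefect, LinearMap.coe_mk, AddHom.coe_mk, mul_sub]

lemma designDefect_of_pos {n l : ℕ} (X : Finset (Euc n)) (w : Euc n → ℝ) (hl : 1 ≤ l) (j : ℕ)
    {φ : MvPolynomial (Fin n) ℝ} (hφ : φ.IsHomogeneous l) (h0 : lap n φ = 0) :
    designDefect n X w (normSqPoly n ^ j * φ) =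
      -∑ u ∈ X, w u * ‖u‖ ^ (2 * j) * evalPt u φ := by
  simp only [designDefect, LinearMap.coe_mk, AddHom.coe_mk]
  rw [← Finset.sum_neg_distrib]
  refine Finset.sum_congr rfl fun x _ => ?_
  rw [sphAvg_normSqPoly_pow_mul (norm_nonneg x), sphAvg_harmonic (norm_nonneg x) hl hφ h0,
    evalPt_normSqPoly_pow_mul]
  ring

/-- Radial polynomials satisfy the design identity for every weighted set. -/
lemma designDefect_of_zero {n : ℕ} (X : Finset (Euc n)) (w : Euc n → ℝ) (j : ℕ)
    {φ : MvPolynomial (Fin n) ℝ} (hφ : φ.IsHomogeneous 0) :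
    designDefect n X w (normSqPoly n ^ j * φ) = 0 := by
  obtain ⟨c, rfl⟩ : ∃ c, φ = MvPolynomial.C c := ⟨_, MvPolynomial.totalDegree_eq_zero_iff_eq_C.1
    ((MvPolynomial.totalDegree_zero_iff_isHomogeneous _).2 hφ)⟩
  simp only [designDefect, LinearMap.coe_mk, AddHom.coe_mk]
  refine Finset.sum_eq_zero fun x _ => ?_
  have e : ∀ y : Euc n, evalPt y (MvPolynomial.C c) = c := fun y => MvPolynomial.eval_C c
  rw [sphAvg_normSqPoly_pow_mul (norm_nonneg x), evalPt_normSqPoly_pow_mul]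
  simp only [e, sphAvg_const, sub_self, mul_zero]

end Average

/-! ### The equivalence -/

/-- Neumaier–Seidel. `(X, w)` is a Euclidean `t`-design if and only if
`∑_{u ∈ X} w(u) ‖u‖^{2j} φ(u) = 0` for every homogeneous harmonic polynomial
`φ ∈ Harm_l(ℝⁿ)` with `1 ≤ l ≤ t` and every `j` with `0 ≤ j ≤ ⌊(t - l)/2⌋`. -/
theorem euclidean_design_iff_harmonic_moments_vanish
    (n t : ℕ) (htpos : 0 < t)
    (X : Finset (Euc n)) (w : Euc n → ℝ)
    (hne : X.Nonempty) (hw : ∀ x ∈ X, 0 < w x) :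
    IsEuclideanDesign n t X w ↔
      ∀ l : ℕ, 1 ≤ l → l ≤ t → ∀ j : ℕ, j ≤ (t - l) / 2 →
        ∀ φ : MvPolynomial (Fin n) ℝ, φ.IsHomogeneous l → lap n φ = 0 →
          ∑ u ∈ X, w u * ‖u‖ ^ (2 * j) * evalPt u φ = 0 := by
  rw [isEuclideanDesign_iff_designDefect]
  constructor
  · intro h l hl hlt j hj φ hφ h0
    have hd : (normSqPoly n ^ j * φ).totalDegree ≤ t :=
      (((normSqPoly_isHomogeneous n).pow j).mul hφ).totalDegree_le.trans (by omega)
    rw [← neg_eq_zero, ← designDefect_of_pos X w hl j hφ h0]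
    exact h _ hd
  · intro h p hp
    have key : ∀ d ≤ t, radialHarmonicSpan n d ≤ LinearMap.ker (designDefect n X w) := by
      intro d hd
      refine Submodule.span_le.2 ?_
      rintro _ ⟨l, j, φ, hφ, h0, hlj, rfl⟩
      rw [SetLike.mem_coe, LinearMap.mem_ker]
      rcases Nat.eq_zero_or_pos l with rfl | hl
      · exact designDefect_of_zero X w j hφ
      · rw [designDefect_of_pos X w hl j hφ h0, h l hl (by omega) j (by omega) φ hφ h0, neg_zero]
    rw [← MvPolynomial.sum_homogeneousComponent p, map_sum]
    refine Finset.sum_eq_zero fun d hd => key d ?_ ?_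
    · rw [Finset.mem_range] at hd
      omega
    · exact mem_radialHarmonicSpan d (MvPolynomial.homogeneousComponent_isHomogeneous d p)

end
end

section
/- Let (X, w) be a tight Euclidean 2e-design on p concentric spheres in ℝⁿ, and suppose p − ε_S ≤ e. Then for each i with r_i > 0, the rescaled layer (1/r_i)·X_i ⊆ S^{n−1} is a spherical (2e − 2p + 2ε_S + 2)-design. -/
/-! For a tight design the weight is constant on each layer, and this turns weighted
quadrature on a layer into a spherical design.

* *Layers.* Multiplying a test polynomial `f` by `∏ (‖x‖² - s²)`, taken over the other nonzero radii
  `s`, costs `2(p - ε - 1)` degrees and kills every sphere except `S_r` and possibly the origin. At the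
  origin the two sides of the design identity agree trivially, so the weighted layer `X_r`
  integrates every `f` of degree at most `2(e - p + ε) + 2` exactly over `S_r`
  (`layer_identity`). For `f = 1` this shows that the Hausdorff measure of `S_r` is nonzero and
  finite (`sphAvg_one`, `sphere_measure`), so no separate computation of that measure is needed.
* *Lagrange polynomials.* If `f` of degree at most `e` vanishes on `X`, the design identity for
  `f²` forces `f = 0` on `S`, because an isometry-invariant finite nonzero measure charges every
  nonempty relatively open subset of the sphere (`eq_zero_of_sphAvg_sq`). Hence evaluation
  `Pol_e(S) → ℝ^X` is injective, and by tightness bijective, which gives polynomials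
  `f_y` of degree at most `e` with `f_y(z) = δ_{yz}` on `X` (`exists_lagrange`).
* *Equal weights.* If `‖x‖ = ‖y‖`, take an isometry `g` with `g x = y`. The
  design identity for `(f_y ∘ g)²` and for `f_y²`, whose spherical averages coincide, gives
  `w x ≤ ∑ w z f_y(g z)² = ∑ w z f_y(z)² = w y` (`weight_le`).
-/

open MeasureTheory Metric Finset
open scoped Classical RealInnerProductSpace

noncomputable section

/-- `Y` is a spherical `t`-design on the unit sphere `S^{n-1} ⊆ ℝⁿ`:
the average of every polynomial of degree at most `t` over the sphere (with respect to
the `O(n)`-invariant surface measure) equals its average over `Y`. -/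
def IsSphericalDesign (n t : ℕ) (Y : Finset (Euc n)) : Prop :=
  Y.Nonempty ∧ (↑Y : Set (Euc n)) ⊆ Metric.sphere (0 : Euc n) 1 ∧
    ∀ p : MvPolynomial (Fin n) ℝ, p.totalDegree ≤ t →
      (⨍ x in Metric.sphere (0 : Euc n) 1, evalPt x p ∂(μH[(n : ℝ) - 1]))
        = (∑ x ∈ Y, evalPt x p) / Y.card

/-! ### Polynomials on `ℝⁿ` -/

lemma evalPt_mul {n : ℕ} (x : Euc n) (p q : MvPolynomial (Fin n) ℝ) :
    evalPt x (p * q) = evalPt x p * evalPt x q := by simp [evalPt]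

/-- Precomposition with a linear map does not raise the degree of a polynomial. -/
lemma exists_poly_comp {n : ℕ} (L : Euc n →ₗ[ℝ] Euc n) (p : MvPolynomial (Fin n) ℝ) :
    ∃ q : MvPolynomial (Fin n) ℝ, q.totalDegree ≤ p.totalDegree ∧
      ∀ x, evalPt x q = evalPt (L x) p := by
  let ℓ : Fin n → MvPolynomial (Fin n) ℝ := fun i =>
    ∑ j, MvPolynomial.C (L (EuclideanSpace.single j 1) i) * MvPolynomial.X j
  have hdeg : ∀ i, (ℓ i).totalDegree ≤ 1 := fun i => by
    refine MvPolynomial.totalDegree_finsetSum_le fun j _ => ?_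
    refine (MvPolynomial.totalDegree_mul _ _).trans ?_
    simp
  have hev : ∀ (x : Euc n) i, MvPolynomial.eval (fun k => x k) (ℓ i) = L x i := fun x i => by
    have hx : x = ∑ j, x j • EuclideanSpace.single j (1 : ℝ) := by
      ext k
      simp [Finset.sum_apply, Pi.single_apply]
    conv_rhs => rw [hx]
    simp [ℓ, mul_comm]
  refine ⟨MvPolynomial.bind₁ ℓ p, ?_, fun x => ?_⟩
  · rw [MvPolynomial.bind₁, MvPolynomial.aeval_def, MvPolynomial.eval₂_eq]
    refine MvPolynomial.totalDegree_finsetSum_le fun d hd => ?_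
    refine (MvPolynomial.totalDegree_mul _ _).trans ?_
    rw [MvPolynomial.algebraMap_eq, MvPolynomial.totalDegree_C, zero_add]
    refine (MvPolynomial.totalDegree_finsetProd _ _).trans ?_
    refine le_trans ?_ (MvPolynomial.le_totalDegree hd)
    rw [Finsupp.sum]
    refine Finset.sum_le_sum fun i _ => ?_
    refine (MvPolynomial.totalDegree_pow _ _).trans ?_
    simpa using Nat.mul_le_mul_left (d i) (hdeg i)
  · simp only [evalPt]
    rw [← MvPolynomial.coe_aeval_eq_eval, RingHom.coe_coe, MvPolynomial.aeval_bind₁,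
      ← MvPolynomial.coe_aeval_eq_eval, RingHom.coe_coe]
    congr 1
    simp only [hev, MvPolynomial.aeval_eq_eval]

/-- The polynomial `∏_{s ∈ T} (‖x‖² - s²)`, which vanishes on the spheres with radius in `T`. -/
def layerPoly (n : ℕ) (T : Finset ℝ) : MvPolynomial (Fin n) ℝ :=
  ∏ s ∈ T, (∑ i, MvPolynomial.X i ^ 2 - MvPolynomial.C (s ^ 2))

lemma evalPt_layerPoly {n : ℕ} (T : Finset ℝ) (x : Euc n) :
    evalPt x (layerPoly n T) = ∏ s ∈ T, (‖x‖ ^ 2 - s ^ 2) := by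
  simp [evalPt, layerPoly, EuclideanSpace.norm_sq_eq]

lemma totalDegree_layerPoly (n : ℕ) (T : Finset ℝ) :
    (layerPoly n T).totalDegree ≤ 2 * T.card := by
  refine (MvPolynomial.totalDegree_finsetProd _ _).trans ?_
  rw [mul_comm, ← smul_eq_mul]
  refine Finset.sum_le_card_nsmul _ _ _ fun s _ => ?_
  refine (MvPolynomial.totalDegree_sub_C_le _ _).trans ?_
  refine MvPolynomial.totalDegree_finsetSum_le fun i _ => ?_
  simp [MvPolynomial.totalDegree_X_pow]

/-! ### Averages over spheres -/

/-- Averages are transported by a measurable equivalence scaling the measure by a nonzero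
constant. No finiteness of the measure is required. -/
lemma average_transport {E : Type*} [MeasurableSpace E] (μ : Measure E) (φ : E ≃ᵐ E)
    (c : NNReal) (hc : c ≠ 0) (h : μ.map φ = c • μ) (s : Set E) (f : E → ℝ) :
    ⨍ y in s, f y ∂μ = ⨍ x in φ ⁻¹' s, f (φ x) ∂μ := by
  have key : ∀ g : E → ℝ, ∫ x in φ ⁻¹' s, g (φ x) ∂μ = (c : ℝ) * ∫ y in s, g y ∂μ := fun g => by
    rw [← setIntegral_map_equiv, h, Measure.restrict_smul, integral_smul_nnreal_measure]
    rfl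
  have h1 := key fun _ => 1
  simp only [setIntegral_const, smul_eq_mul, mul_one] at h1
  have hc' : (c : ℝ) ≠ 0 := by exact_mod_cast hc
  rw [setAverage_eq, setAverage_eq, key, h1, smul_eq_mul, smul_eq_mul, mul_inv]
  field_simp

lemma sphAvg_isometry {n : ℕ} (g : Euc n ≃ₗᵢ[ℝ] Euc n) (r : ℝ) (f : Euc n → ℝ) :
    sphAvg n r (fun x => f (g x)) = sphAvg n r f := by
  unfold sphAvg
  split_ifs with hr
  · simp
  · have hmp := g.toIsometryEquiv.measurePreserving_hausdorffMeasure ((n : ℝ) - 1)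
    have key := average_transport _ g.toHomeomorph.toMeasurableEquiv 1 one_ne_zero
      (by rw [one_smul]; exact hmp.map_eq) (sphere 0 r) f
    have : g.toHomeomorph.toMeasurableEquiv ⁻¹' sphere (0 : Euc n) r = sphere (0 : Euc n) r := by
      ext x
      simp
    rw [this] at key
    exact key.symm

/-- A homothety carries the average over the unit sphere to the average over the sphere of
radius `r`. The Hausdorff dimension `n - 1` must be nonnegative here. -/
lemma sphAvg_scale {n : ℕ} (hn : 1 ≤ n) {r : ℝ} (hr : 0 < r) (f : Euc n → ℝ) :
    sphAvg n r f = ⨍ x in sphere (0 : Euc n) 1, f (r • x) ∂(μH[(n : ℝ) - 1]) := by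
  have hd : (0 : ℝ) ≤ (n : ℝ) - 1 := by
    have : (1 : ℝ) ≤ n := by exact_mod_cast hn
    linarith
  rw [sphAvg, if_neg hr.ne']
  rw [average_transport _ (Homeomorph.smulOfNeZero r hr.ne').toMeasurableEquiv
    (‖r⁻¹‖₊ ^ ((n : ℝ) - 1)) (by simp [NNReal.rpow_eq_zero_iff, hr.ne'])]
  · have : (Homeomorph.smulOfNeZero r hr.ne').toMeasurableEquiv ⁻¹' sphere (0 : Euc n) r
        = sphere (0 : Euc n) 1 := by
      ext x
      simp [norm_smul, abs_of_pos hr, hr.ne']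
    rw [this]
    rfl
  · ext s hs
    rw [MeasurableEquiv.map_apply, Measure.smul_apply,
      ← Measure.hausdorffMeasure_smul₀ hd (inv_ne_zero hr.ne'), ← Set.preimage_smul₀ hr.ne']
    rfl

lemma sphAvg_sq_nonneg {n : ℕ} (r : ℝ) (f : Euc n → ℝ) : 0 ≤ sphAvg n r fun x => f x * f x := by
  unfold sphAvg
  split_ifs with hr
  · exact mul_self_nonneg _
  · rw [setAverage_eq]
    exact mul_nonneg (inv_nonneg.2 measureReal_nonneg)
      (integral_nonneg fun x => mul_self_nonneg (f x))

/-- A function which is radially a constant multiple of `f` on a sphere has that multiple of the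
average of `f` as its average. -/
lemma sphAvg_radial_mul {n : ℕ} (r : ℝ) (a : ℝ → ℝ) (f : Euc n → ℝ) :
    sphAvg n r (fun x => a ‖x‖ * f x) = a r * sphAvg n r f := by
  unfold sphAvg
  split_ifs with h
  · simp [h]
  · rw [setAverage_congr_fun (g := fun x => a r * f x) isClosed_sphere.measurableSet
      (Filter.Eventually.of_forall fun x hx => by rw [mem_sphere_zero_iff_norm.1 hx])]
    rw [setAverage_eq, setAverage_eq, integral_const_mul, smul_eq_mul, smul_eq_mul]
    ring

/-- With Mathlib's conventions, `1` averages to `1` over the sphere only if the sphere has nonzero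
finite measure. -/
lemma sphere_measure {n : ℕ} {r : ℝ} (hr : r ≠ 0) (h : sphAvg n r (fun _ => 1) = 1) :
    (μH[(n : ℝ) - 1] : Measure (Euc n)) (sphere 0 r) ≠ 0 ∧
      (μH[(n : ℝ) - 1] : Measure (Euc n)) (sphere 0 r) ≠ ⊤ := by
  rw [sphAvg, if_neg hr, setAverage_eq] at h
  constructor <;> intro h0 <;> simp [Measure.real, h0] at h

/-- A continuous function whose square averages to zero over a sphere vanishes there, as soon as
the sphere has nonzero finite measure: otherwise a relatively open null set, moved around
by isometries, would cover the sphere. -/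
lemma eq_zero_of_sphAvg_sq {n : ℕ} {r : ℝ} (h1 : r ≠ 0 → sphAvg n r (fun _ => 1) = 1)
    {f : Euc n → ℝ} (hf : Continuous f) (h : sphAvg n r (fun x => f x * f x) = 0)
    {x : Euc n} (hx : ‖x‖ = r) : f x = 0 := by
  by_cases hr : r = 0
  · subst hr
    rw [norm_eq_zero] at hx
    simpa [sphAvg, hx] using h
  obtain ⟨hμ0, hμt⟩ := sphere_measure hr (h1 hr)
  set μ : Measure (Euc n) := μH[(n : ℝ) - 1] with hμ
  by_contra hfx
  apply hμ0
  rw [sphAvg, if_neg hr, setAverage_eq] at h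
  have hint : ∫ y in sphere (0 : Euc n) r, f y * f y ∂μ = 0 := by
    refine (smul_eq_zero.1 h).resolve_left (inv_ne_zero ?_)
    exact ENNReal.toReal_ne_zero.2 ⟨hμ0, hμt⟩
  have hcpt : IsCompact (sphere (0 : Euc n) r) := isCompact_sphere _ _
  have hI : IntegrableOn (fun y => f y * f y) (sphere (0 : Euc n) r) μ :=
    (hf.mul hf).continuousOn.integrableOn_of_subset_isCompact hcpt
      hcpt.measurableSet subset_rfl hμt
  rw [setIntegral_eq_zero_iff_of_nonneg_ae
    (Filter.Eventually.of_forall fun y => mul_self_nonneg (f y)) hI,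
    Filter.EventuallyEq, ae_restrict_iff' hcpt.measurableSet, ae_iff] at hint
  have hnull : μ ({y | f y ≠ 0} ∩ sphere 0 r) = 0 := by
    refine measure_mono_null (fun y hy => ?_) hint
    simpa using ⟨by simpa using hy.2, hy.1⟩
  refine hcpt.measure_zero_of_nhdsWithin fun y hy => ?_
  rw [mem_sphere_zero_iff_norm] at hy
  let g := (ℝ ∙ (y - x))ᗮ.reflection
  have hgy : g y = x := Submodule.reflection_sub (hy.trans hx.symm)
  refine ⟨g ⁻¹' ({y | f y ≠ 0} ∩ sphere 0 r), ?_, ?_⟩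
  · refine mem_nhdsWithin.2 ⟨g ⁻¹' {y | f y ≠ 0}, ?_, ?_, ?_⟩
    · exact (isOpen_ne_fun hf continuous_const).preimage g.continuous
    · simpa [hgy] using hfx
    · rintro z ⟨hz, hzr⟩
      refine ⟨hz, ?_⟩
      simpa using hzr
  · have := g.toIsometryEquiv.hausdorffMeasure_preimage ((n : ℝ) - 1)
      ({y | f y ≠ 0} ∩ sphere 0 r)
    exact this.trans hnull

/-! ### Euclidean designs -/

/-- The weighted layer of radius `r` integrates polynomials exactly, at the cost of two degrees for
every other nonzero radius. -/
lemma layer_identity {n t : ℕ} {X : Finset (Euc n)} {w : Euc n → ℝ}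
    (hX : IsEuclideanDesign n t X w) {r : ℝ} (hr : r ∈ X.image (fun x => ‖x‖)) (hr0 : 0 < r)
    (p : MvPolynomial (Fin n) ℝ)
    (hp : 2 * (((X.image (fun x => ‖x‖)).erase 0).erase r).card + p.totalDegree ≤ t) :
    (∑ x ∈ X.filter (fun x => ‖x‖ = r), w x) * sphAvg n r (fun y => evalPt y p)
      = ∑ x ∈ X.filter (fun x => ‖x‖ = r), w x * evalPt x p := by
  set R := X.image (fun x => ‖x‖) with hR
  set T := (R.erase 0).erase r with hT
  have hRnn : ∀ s ∈ R, 0 ≤ s := fun s hs => by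
    obtain ⟨x, -, rfl⟩ := Finset.mem_image.1 hs
    exact norm_nonneg x
  let a : ℝ → ℝ := fun ρ => ∏ s ∈ T, (ρ ^ 2 - s ^ 2)
  have h := hX (layerPoly n T * p) ((MvPolynomial.totalDegree_mul _ _).trans
    ((Nat.add_le_add_right (totalDegree_layerPoly n T) _).trans hp))
  simp only [evalPt_mul, evalPt_layerPoly] at h
  rw [← Finset.sum_fiberwise_of_maps_to (s := X) (t := R) (g := fun x => ‖x‖)
    (fun x hx => Finset.mem_image_of_mem _ hx), ← sub_eq_zero, ← Finset.sum_sub_distrib] at h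
  have hterm : ∀ s ∈ R, (∑ x ∈ X.filter (fun x => ‖x‖ = s), w x) *
        sphAvg n s (fun y => a ‖y‖ * evalPt y p)
      - ∑ x ∈ X.filter (fun x => ‖x‖ = s), w x * (a ‖x‖ * evalPt x p)
      = a s * ((∑ x ∈ X.filter (fun x => ‖x‖ = s), w x) * sphAvg n s (fun y => evalPt y p)
        - ∑ x ∈ X.filter (fun x => ‖x‖ = s), w x * evalPt x p) := fun s hs => by
    rw [sphAvg_radial_mul, mul_sub, Finset.mul_sum (a := a s)]
    congr 1
    · ring
    · refine Finset.sum_congr rfl fun x hx => ?_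
      rw [(Finset.mem_filter.1 hx).2]
      ring
  rw [Finset.sum_congr rfl hterm, Finset.sum_eq_single_of_mem r hr] at h
  · have ha : a r ≠ 0 := by
      refine Finset.prod_ne_zero_iff.2 fun s hs => ?_
      rw [hT, Finset.mem_erase, Finset.mem_erase] at hs
      rw [sub_ne_zero]
      exact fun h' => hs.1 ((pow_left_inj₀ hr0.le (hRnn s hs.2.2) two_ne_zero).1 h').symm
    exact sub_eq_zero.1 ((mul_eq_zero.1 h).resolve_left ha)
  · intro s hs hsr
    by_cases hs0 : s = 0
    -- at the origin both sides equal `w(X_0) p(0)`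
    · subst hs0
      have : ∀ x ∈ X.filter (fun x => ‖x‖ = 0), w x * evalPt x p = w x * evalPt 0 p := by
        intro x hx
        rw [norm_eq_zero.1 (Finset.mem_filter.1 hx).2]
      rw [Finset.sum_congr rfl this, ← Finset.sum_mul]
      simp [sphAvg]
    · have : a s = 0 :=
        Finset.prod_eq_zero (i := s) (by simp [hT, hsr, hs0, hs]) (sub_self _)
      rw [this, zero_mul]

lemma layer_weight_pos {n : ℕ} {X : Finset (Euc n)} {w : Euc n → ℝ} (hw : ∀ x ∈ X, 0 < w x)
    {r : ℝ} (hr : r ∈ X.image (fun x => ‖x‖)) : 0 < ∑ x ∈ X.filter (fun x => ‖x‖ = r), w x := by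
  obtain ⟨x, hx, rfl⟩ := Finset.mem_image.1 hr
  exact Finset.sum_pos (fun y hy => hw y (Finset.mem_filter.1 hy).1)
    ⟨x, Finset.mem_filter.2 ⟨hx, rfl⟩⟩

lemma sphAvg_one {n t : ℕ} {X : Finset (Euc n)} {w : Euc n → ℝ}
    (hX : IsEuclideanDesign n t X w) (hw : ∀ x ∈ X, 0 < w x)
    {r : ℝ} (hr : r ∈ X.image (fun x => ‖x‖)) (hr0 : 0 < r)
    (hp : 2 * (((X.image (fun x => ‖x‖)).erase 0).erase r).card ≤ t) :
    sphAvg n r (fun _ => 1) = 1 := by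
  have h := layer_identity hX hr hr0 1 (by simpa using hp)
  simp only [evalPt, map_one, mul_one] at h
  exact mul_left_cancel₀ (layer_weight_pos hw hr).ne' (h.trans (mul_one _).symm)

/-- The Lagrange polynomials of a tight design. -/
lemma exists_lagrange {n e : ℕ} {X : Finset (Euc n)} {w : Euc n → ℝ}
    (hw : ∀ x ∈ X, 0 < w x) (ht : IsTightOnS n e X w)
    (h1 : ∀ r ∈ X.image (fun x => ‖x‖), r ≠ 0 → sphAvg n r (fun _ => 1) = 1)
    (y : Euc n) :
    ∃ q : MvPolynomial (Fin n) ℝ, q.totalDegree ≤ e ∧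
      ∀ z ∈ X, evalPt z q = if z = y then 1 else 0 := by
  set S := suppSpheres n X with hS
  have hmem : ∀ x : Euc n, x ∈ S ↔ ‖x‖ ∈ X.image (fun x => ‖x‖) := fun x => by
    simp [hS, suppSpheres, eq_comm]
  have hXS : ∀ x : X, (x : Euc n) ∈ S := fun x =>
    (hmem x).2 (Finset.mem_image_of_mem _ x.2)
  let ev : PolOn n e S →ₗ[ℝ] (X → ℝ) :=
    (LinearMap.funLeft ℝ ℝ fun x : X => (⟨x, hXS x⟩ : S)) ∘ₗ (PolOn n e S).subtype
  have hinj : Function.Injective ev := by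
    rw [← LinearMap.ker_eq_bot, LinearMap.ker_eq_bot']
    rintro ⟨f, hf⟩ hfX
    obtain ⟨q, hq, rfl⟩ := Submodule.mem_map.1 hf
    rw [MvPolynomial.mem_restrictTotalDegree] at hq
    have hqX : ∀ x ∈ X, evalPt x q = 0 := fun x hx => congrFun hfX ⟨x, hx⟩
    have hd := ht.1 (q * q) ((MvPolynomial.totalDegree_mul _ _).trans (by omega))
    simp only [evalPt_mul] at hd
    rw [Finset.sum_eq_zero (s := X) (fun x hx => by simp [hqX x hx]),
      Finset.sum_eq_zero_iff_of_nonneg fun r hr =>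
        mul_nonneg (layer_weight_pos hw hr).le (sphAvg_sq_nonneg r fun x => evalPt x q)] at hd
    ext ⟨x, hx⟩
    have hx' := (hmem x).1 hx
    have := (mul_eq_zero.1 (hd _ hx')).resolve_left (layer_weight_pos hw hx').ne'
    exact eq_zero_of_sphAvg_sq (h1 _ hx') (continuous_evalPt q) this rfl
  have hfin : FiniteDimensional ℝ (PolOn n e S) := Module.Finite.of_injective ev hinj
  have hrank : Module.finrank ℝ (PolOn n e S) = Module.finrank ℝ (X → ℝ) := by
    rw [Module.finrank_fintype_fun_eq_card, Fintype.card_coe]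
    exact ht.2.symm
  obtain ⟨⟨f, hf⟩, hfy⟩ :=
    (LinearMap.injective_iff_surjective_of_finrank_eq_finrank hrank).1 hinj
      fun z => if (z : Euc n) = y then 1 else 0
  obtain ⟨q, hq, rfl⟩ := Submodule.mem_map.1 hf
  exact ⟨q, (MvPolynomial.mem_restrictTotalDegree _ _ _).1 hq,
    fun z hz => congrFun hfy ⟨z, hz⟩⟩

/-- Points of equal norm in a tight design have comparable weights; by symmetry, equal ones. -/
lemma weight_le {n e : ℕ} {X : Finset (Euc n)} {w : Euc n → ℝ}
    (hw : ∀ x ∈ X, 0 < w x) (ht : IsTightOnS n e X w)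
    (h1 : ∀ r ∈ X.image (fun x => ‖x‖), r ≠ 0 → sphAvg n r (fun _ => 1) = 1)
    {x y : Euc n} (hx : x ∈ X) (hy : y ∈ X) (hxy : ‖x‖ = ‖y‖) : w x ≤ w y := by
  obtain ⟨q, hq, hqX⟩ := exists_lagrange hw ht h1 y
  let g := (ℝ ∙ (x - y))ᗮ.reflection
  have hgx : g x = y := Submodule.reflection_sub hxy
  obtain ⟨q', hq', hq'e⟩ := exists_poly_comp g.toLinearEquiv.toLinearMap q
  have hq'e : ∀ z, evalPt z q' = evalPt (g z) q := hq'e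
  have hd := ht.1 (q * q) ((MvPolynomial.totalDegree_mul _ _).trans (by omega))
  have hd' := ht.1 (q' * q') ((MvPolynomial.totalDegree_mul _ _).trans (by omega))
  simp only [evalPt_mul, hq'e] at hd hd'
  simp only [sphAvg_isometry g _ fun z => evalPt z q * evalPt z q] at hd'
  have hsum : ∑ z ∈ X, w z * (evalPt z q * evalPt z q) = w y := by
    rw [Finset.sum_eq_single_of_mem y hy fun z hz hzy => by simp [hqX z hz, hzy]]
    simp [hqX y hy]
  calc w x = w x * (evalPt (g x) q * evalPt (g x) q) := by simp [hgx, hqX y hy]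
    _ ≤ ∑ z ∈ X, w z * (evalPt (g z) q * evalPt (g z) q) :=
      Finset.single_le_sum (f := fun z => w z * (evalPt (g z) q * evalPt (g z) q))
        (fun z hz => mul_nonneg (hw z hz).le (mul_self_nonneg _)) hx
    _ = w y := by rw [← hd', hd, hsum]

/-- Let `(X, w)` be a tight Euclidean `2e`-design on `p` concentric
spheres in `ℝⁿ` with `p - ε_S ≤ e`. Then for each radius `r > 0`, the rescaled layer
`(1/r) · Xᵢ ⊆ S^{n-1}` is a spherical `(2e - 2p + 2ε_S + 2)`-design. -/
theorem rescaled_layers_are_spherical_designs (n e : ℕ)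
    (X : Finset (Euc n)) (w : Euc n → ℝ)
    (hne : X.Nonempty) (hw : ∀ x ∈ X, 0 < w x)
    (ht : IsTightOnS n e X w)
    (p : ℕ) (hp : p = (X.image (fun x => ‖x‖)).card)
    (ε : ℕ) (hε : ε = if (0 : Euc n) ∈ X then 1 else 0)
    (hpe : p - ε ≤ e) :
    ∀ r ∈ X.image (fun x => ‖x‖), 0 < r →
      IsSphericalDesign n (2 * e + 2 * ε + 2 - 2 * p)
        ((X.filter (fun x => ‖x‖ = r)).image (fun x => r⁻¹ • x)) := by
  intro r hr hr0
  -- the number of nonzero radii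
  have hcard0 : ((X.image (fun x => ‖x‖)).erase 0).card = p - ε := by
    by_cases h0 : (0 : Euc n) ∈ X
    · rw [if_pos h0] at hε
      rw [Finset.card_erase_of_mem (Finset.mem_image.2 ⟨0, h0, norm_zero⟩), ← hp, hε]
    · rw [if_neg h0] at hε
      rw [Finset.erase_eq_of_notMem, ← hp, hε, Nat.sub_zero]
      intro h
      obtain ⟨x, hx, hx0⟩ := Finset.mem_image.1 h
      exact h0 (norm_eq_zero.1 hx0 ▸ hx)
  have hcard : ∀ s ∈ X.image (fun x => ‖x‖), s ≠ 0 →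
      (((X.image (fun x => ‖x‖)).erase 0).erase s).card + 1 = p - ε := fun s hs hs0 => by
    rw [← hcard0]
    exact Finset.card_erase_add_one (Finset.mem_erase.2 ⟨hs0, hs⟩)
  have h1 : ∀ s ∈ X.image (fun x => ‖x‖), s ≠ 0 → sphAvg n s (fun _ => 1) = 1 := by
    intro s hs hs0
    have := hcard s hs hs0
    refine sphAvg_one ht.1 hw hs (lt_of_le_of_ne ?_ hs0.symm) (by omega)
    obtain ⟨x, -, rfl⟩ := Finset.mem_image.1 hs
    exact norm_nonneg x
  have hinj : Function.Injective fun x : Euc n => r⁻¹ • x :=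
    smul_right_injective _ (inv_ne_zero hr0.ne')
  obtain ⟨x₀, hx₀, hx₀r⟩ := Finset.mem_image.1 hr
  have hn : 1 ≤ n := by
    rcases Nat.eq_zero_or_pos n with rfl | h
    · rw [Subsingleton.elim x₀ 0, norm_zero] at hx₀r
      exact absurd hx₀r hr0.ne
    · exact h
  refine ⟨⟨_, Finset.mem_image_of_mem _ (Finset.mem_filter.2 ⟨hx₀, hx₀r⟩)⟩, ?_, fun f hf => ?_⟩
  · intro y hy
    obtain ⟨x, hx, rfl⟩ := Finset.mem_image.1 (Finset.mem_coe.1 hy)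
    rw [mem_sphere_zero_iff_norm, norm_smul, (Finset.mem_filter.1 hx).2, Real.norm_eq_abs,
      abs_of_pos (inv_pos.2 hr0), inv_mul_cancel₀ hr0.ne']
  · obtain ⟨q, hq, hqe⟩ := exists_poly_comp (r⁻¹ • LinearMap.id) f
    have hqe : ∀ x, evalPt x q = evalPt (r⁻¹ • x) f := hqe
    have hc := hcard r hr hr0.ne'
    have hl := layer_identity ht.1 hr hr0 q (by omega)
    have hconst : ∀ x ∈ X.filter (fun x => ‖x‖ = r), w x = w x₀ := fun x hx => by
      obtain ⟨hxX, hxr⟩ := Finset.mem_filter.1 hx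
      exact le_antisymm (weight_le hw ht h1 hxX hx₀ (hxr.trans hx₀r.symm))
        (weight_le hw ht h1 hx₀ hxX (hx₀r.trans hxr.symm))
    have hsum : ∑ x ∈ X.filter (fun x => ‖x‖ = r), w x * evalPt x q
        = w x₀ * ∑ x ∈ X.filter (fun x => ‖x‖ = r), evalPt x q := by
      rw [Finset.mul_sum]
      exact Finset.sum_congr rfl fun x hx => by rw [hconst x hx]
    rw [Finset.sum_congr rfl hconst, hsum, Finset.sum_const, nsmul_eq_mul,
      mul_comm ((X.filter (fun x => ‖x‖ = r)).card : ℝ) (w x₀), mul_assoc] at hl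
    have hl := mul_left_cancel₀ (hw x₀ hx₀).ne' hl
    rw [sphAvg_scale hn hr0] at hl
    simp only [hqe, inv_smul_smul₀ hr0.ne'] at hl
    have hne' : ((X.filter (fun x => ‖x‖ = r)).card : ℝ) ≠ 0 :=
      Nat.cast_ne_zero.2 (Finset.card_ne_zero_of_mem (Finset.mem_filter.2 ⟨hx₀, hx₀r⟩))
    rw [Finset.sum_image fun a _ b _ h => hinj h, Finset.card_image_of_injective _ hinj,
      eq_div_iff hne', ← hl, mul_comm]

end
end

section
/- If X ⊆ S^{n−1}, n ≥ 3, is a tight spherical 4-design (i.e. a spherical 4-design with |X| = C(n+1, n−1) + C(n, n−1) = n(n+3)/2), then n = (2m+1)² − 3 for some positive integer m; in particular no tight spherical 4-design exists on S^{n−1} for n ∈ {3, 4, 5, 7, 8}. -/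
/-! The `O(n)`-invariance of the surface measure makes the power sums `∑ z ∈ Y, ⟪a, z⟫ ^ k`, `k ≤ 4`,
of a 4-design depend only on `‖a‖`; this alone determines them (`powSum_odd`, `moment_two`,
`moment_four`), with no integral over the sphere ever computed.

For a unit vector `x`, these moments evaluate `∑ z ∈ Y, ((n + 2) t² + 2 t - 1)²` with `t = ⟪x, z⟫`.
The polynomial is, up to scale, the reproducing kernel of the polynomials of degree at most two on
the sphere, and tightness says that for `x ∈ Y` the single term `z = x` already exhausts the sum.
Hence distinct points of `Y` have inner product `1 / (s + 1)` or `-1 / (s - 1)`, where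
`s = √(n + 3)` (`inner_eq_or`).

Let `A` be the 0-1 matrix recording the pairs with inner product `1 / (s + 1)`. As `∑ z ∈ Y, z = 0`,
the row sums `a` of `A` satisfy `s (2 a - N + 1) = N - s² ≠ 0` with `N = |Y|`, so `s` is rational,
hence an integer. The Gram matrix of `Y` has rank at most `n < N - 1`, and a kernel vector with zero
coordinate sum is an eigenvector of `A` with eigenvalue `-(s + 1) / 2`. A rational eigenvalue of an
integer matrix is an integer, so `s = 2 m + 1` is odd and `n = s² - 3`. -/

open MeasureTheory Metric Finset
open scoped Classical RealInnerProductSpace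

noncomputable section

namespace TightFour

/-! ### Invariant moments of a design -/

/-- The linear form `⟪a, ·⟫` as a polynomial. -/
def linForm {n : ℕ} (a : Euc n) : MvPolynomial (Fin n) ℝ :=
  ∑ i, MvPolynomial.C (a i) * MvPolynomial.X i

lemma totalDegree_linForm_pow {n : ℕ} (a : Euc n) (k : ℕ) :
    (linForm a ^ k).totalDegree ≤ k := by
  refine (MvPolynomial.totalDegree_pow _ _).trans ?_
  have : (linForm a).totalDegree ≤ 1 := by
    refine MvPolynomial.totalDegree_finsetSum_le fun i _ => ?_
    refine (MvPolynomial.totalDegree_mul _ _).trans ?_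
    simp
  nlinarith

lemma evalPt_linForm_pow {n : ℕ} (a x : Euc n) (k : ℕ) :
    evalPt x (linForm a ^ k) = ⟪a, x⟫ ^ k := by
  simp [evalPt, linForm, PiLp.inner_apply, mul_comm]

/-- No integrability is needed: a linear isometry preserves the sphere and its Hausdorff measure. -/
lemma average_comp_isometry {n : ℕ} (L : Euc n ≃ₗᵢ[ℝ] Euc n) (f : Euc n → ℝ) :
    (⨍ x in Metric.sphere (0 : Euc n) 1, f (L x) ∂(μH[(n : ℝ) - 1]))
      = ⨍ x in Metric.sphere (0 : Euc n) 1, f x ∂(μH[(n : ℝ) - 1]) := by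
  have h := (L.toIsometryEquiv.measurePreserving_hausdorffMeasure ((n : ℝ) - 1)
    ).setIntegral_preimage_emb L.toMeasurableEquiv.measurableEmbedding f
      (Metric.sphere (0 : Euc n) 1)
  have hs : L.toIsometryEquiv ⁻¹' Metric.sphere (0 : Euc n) 1 = Metric.sphere (0 : Euc n) 1 := by
    ext x; simp
  rw [hs] at h
  rw [setAverage_eq, setAverage_eq, ← h]
  rfl

/-- The power sum `∑ z ∈ Y, ⟪a, z⟫ ^ k`. -/
def powSum {n : ℕ} (Y : Finset (Euc n)) (k : ℕ) (a : Euc n) : ℝ := ∑ z ∈ Y, ⟪a, z⟫ ^ k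

/-- The reflection exchanging `a` and `b` carries one power sum to the other. -/
lemma powSum_eq_of_norm_eq {n t : ℕ} {Y : Finset (Euc n)} (hY : IsSphericalDesign n t Y)
    {k : ℕ} (hk : k ≤ t) {a b : Euc n} (hab : ‖a‖ = ‖b‖) : powSum Y k a = powSum Y k b := by
  obtain ⟨hne, -, h⟩ := hY
  have hN : (Y.card : ℝ) ≠ 0 := by simpa using hne.ne_empty
  have ha := h _ ((totalDegree_linForm_pow a k).trans hk)
  have hb := h _ ((totalDegree_linForm_pow b k).trans hk)
  simp only [evalPt_linForm_pow] at ha hb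
  obtain ⟨R, hR⟩ : ∃ R : Euc n ≃ₗᵢ[ℝ] Euc n, R a = b :=
    ⟨(ℝ ∙ (a - b))ᗮ.reflection, Submodule.reflection_sub hab⟩
  have key := average_comp_isometry R (fun x => ⟪b, x⟫ ^ k)
  have e : ∀ x : Euc n, ⟪b, R x⟫ = ⟪a, x⟫ := fun x => by
    rw [← hR, R.inner_map_map]
  simp only [e] at key
  rw [key, hb] at ha
  exact (div_left_inj' hN).1 ha.symm

lemma powSum_smul {n : ℕ} (Y : Finset (Euc n)) (k : ℕ) (c : ℝ) (a : Euc n) :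
    powSum Y k (c • a) = c ^ k * powSum Y k a := by
  simp [powSum, inner_smul_left, mul_pow, Finset.mul_sum]

lemma powSum_odd {n t : ℕ} {Y : Finset (Euc n)} (hY : IsSphericalDesign n t Y)
    {k : ℕ} (hk : k ≤ t) (hodd : Odd k) (a : Euc n) : powSum Y k a = 0 := by
  have h := powSum_eq_of_norm_eq hY hk (norm_neg a)
  have h' := powSum_smul Y k (-1) a
  rw [neg_one_smul, hodd.neg_one_pow, h] at h'
  linarith

lemma norm_eq_one_of_mem {n t : ℕ} {Y : Finset (Euc n)} (hY : IsSphericalDesign n t Y)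
    {z : Euc n} (hz : z ∈ Y) : ‖z‖ = 1 := by
  simpa using hY.2.1 hz

/-- Summing over the coordinate directions, `∑ i, ∑ z, z_i² = ∑ z, ‖z‖² = |Y|`. -/
lemma moment_two {n t : ℕ} {Y : Finset (Euc n)} (hY : IsSphericalDesign n t Y) (ht : 2 ≤ t)
    {a : Euc n} (ha : ‖a‖ = 1) : n * powSum Y 2 a = Y.card := by
  have h : ∀ i : Fin n, ∑ z ∈ Y, z i ^ 2 = powSum Y 2 a := fun i => by
    rw [powSum_eq_of_norm_eq hY ht (b := EuclideanSpace.single i (1 : ℝ)) (by simp [ha])]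
    simp [powSum, EuclideanSpace.inner_single_left]
  calc n * powSum Y 2 a = ∑ i : Fin n, ∑ z ∈ Y, z i ^ 2 := by simp [h]
    _ = ∑ z ∈ Y, ∑ i : Fin n, z i ^ 2 := Finset.sum_comm
    _ = ∑ z ∈ Y, (1 : ℝ) := Finset.sum_congr rfl fun z hz => by
      rw [← EuclideanSpace.real_norm_sq_eq, norm_eq_one_of_mem hY hz, one_pow]
    _ = Y.card := by simp

/-- Polarizing along `e_i ± e_j` gives `∑ z, z_i² z_j² = K / 3` for `i ≠ j`, where `K` is the fourth
moment; then `|Y| = ∑ z, ‖z‖⁴` is expanded in coordinates. -/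
lemma moment_four {n t : ℕ} {Y : Finset (Euc n)} (hY : IsSphericalDesign n t Y) (ht : 4 ≤ t)
    {a : Euc n} (ha : ‖a‖ = 1) : (n : ℝ) * (n + 2) * powSum Y 4 a = 3 * Y.card := by
  set K := powSum Y 4 a with hK
  have h : ∀ i : Fin n, ∑ z ∈ Y, z i ^ 4 = K := fun i => by
    rw [hK, powSum_eq_of_norm_eq hY ht (b := EuclideanSpace.single i (1 : ℝ)) (by simp [ha])]
    simp [powSum, EuclideanSpace.inner_single_left]
  have hpm : ∀ i j : Fin n, i ≠ j → ∀ c : ℝ, c ^ 2 = 1 →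
      ∑ z ∈ Y, (z i + c * z j) ^ 4 = 4 * K := fun i j hij c hc => by
    set v : Euc n := EuclideanSpace.single i (1 : ℝ) + c • EuclideanSpace.single j (1 : ℝ) with hv
    have hv2 : ‖v‖ ^ 2 = 2 := by
      rw [hv, norm_add_sq_real]
      simp [inner_smul_right, EuclideanSpace.inner_single_left, norm_smul, hij, hc]
      norm_num
    have hn : ‖v‖ = ‖(√2 : ℝ) • a‖ := by
      rw [norm_smul, ha, mul_one, Real.norm_of_nonneg (Real.sqrt_nonneg 2), ← hv2,
        Real.sqrt_sq (norm_nonneg _)]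
    have h4 : (√2 : ℝ) ^ 4 = 4 := by
      rw [show (√2 : ℝ) ^ 4 = ((√2 : ℝ) ^ 2) ^ 2 by ring, Real.sq_sqrt (by norm_num)]; norm_num
    have := powSum_eq_of_norm_eq hY ht hn
    rw [powSum_smul, h4, ← hK] at this
    rw [← this]
    simp [powSum, hv, inner_add_left, inner_smul_left, EuclideanSpace.inner_single_left]
  have hd : ∀ i j : Fin n, ∑ z ∈ Y, z i ^ 2 * z j ^ 2 = K / 3 + if i = j then 2 * K / 3 else 0 := by
    intro i j
    split_ifs with hij
    · subst hij
      rw [← (by ring : K = K / 3 + 2 * K / 3), ← h i]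
      exact Finset.sum_congr rfl fun z _ => by ring
    · have h1 := hpm i j hij 1 (by norm_num)
      have h2 := hpm i j hij (-1) (by norm_num)
      have h3 : ∑ z ∈ Y, (z i + 1 * z j) ^ 4 + ∑ z ∈ Y, (z i + (-1) * z j) ^ 4
          = 2 * ∑ z ∈ Y, z i ^ 4 + 12 * ∑ z ∈ Y, z i ^ 2 * z j ^ 2 + 2 * ∑ z ∈ Y, z j ^ 4 := by
        simp only [Finset.mul_sum, ← Finset.sum_add_distrib]
        exact Finset.sum_congr rfl fun z _ => by ring
      rw [h1, h2, h i, h j] at h3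
      linarith
  have hN : ∑ i : Fin n, ∑ j : Fin n, ∑ z ∈ Y, z i ^ 2 * z j ^ 2 = Y.card := by
    calc _ = ∑ i : Fin n, ∑ z ∈ Y, ∑ j : Fin n, z i ^ 2 * z j ^ 2 :=
          Finset.sum_congr rfl fun i _ => Finset.sum_comm
      _ = ∑ z ∈ Y, ∑ i : Fin n, ∑ j : Fin n, z i ^ 2 * z j ^ 2 := Finset.sum_comm
      _ = ∑ z ∈ Y, (1 : ℝ) := Finset.sum_congr rfl fun z hz => by
        rw [← Finset.sum_mul_sum, ← EuclideanSpace.real_norm_sq_eq, norm_eq_one_of_mem hY hz]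
        norm_num
      _ = Y.card := by simp
  simp only [hd, Finset.sum_add_distrib, Finset.sum_const, Finset.sum_ite_eq, Finset.mem_univ,
    if_true, Finset.card_univ, Fintype.card_fin, nsmul_eq_mul] at hN
  linarith

/-! ### The two inner products of a tight 4-design -/

/-- Every point of `Y` other than `x` is a zero of the reproducing kernel at `x`. -/
lemma inner_root {n : ℕ} (hn : 3 ≤ n) {Y : Finset (Euc n)} (hY : IsSphericalDesign n 4 Y)
    (hN : (Y.card : ℝ) = n * (n + 3) / 2) {x y : Euc n} (hx : x ∈ Y) (hy : y ∈ Y) (hxy : y ≠ x) :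
    ((n : ℝ) + 2) * ⟪x, y⟫ ^ 2 + 2 * ⟪x, y⟫ - 1 = 0 := by
  have hx1 := norm_eq_one_of_mem hY hx
  have hn0 : (n : ℝ) ≠ 0 := by positivity
  have m1 := powSum_odd hY (k := 1) (by norm_num) (by decide) x
  have m3 := powSum_odd hY (k := 3) (by norm_num) (by decide) x
  have m2 := moment_two hY (by norm_num) hx1
  have m4 := moment_four hY le_rfl hx1
  have hsum : ∑ z ∈ Y, (((n : ℝ) + 2) * ⟪x, z⟫ ^ 2 + 2 * ⟪x, z⟫ - 1) ^ 2 = ((n : ℝ) + 3) ^ 2 := by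
    have : ∑ z ∈ Y, (((n : ℝ) + 2) * ⟪x, z⟫ ^ 2 + 2 * ⟪x, z⟫ - 1) ^ 2
        = (n + 2) ^ 2 * powSum Y 4 x + 4 * (n + 2) * powSum Y 3 x - 2 * n * powSum Y 2 x
          - 4 * powSum Y 1 x + Y.card := by
      rw [Finset.cast_card]
      simp only [powSum, Finset.mul_sum, ← Finset.sum_add_distrib, ← Finset.sum_sub_distrib]
      exact Finset.sum_congr rfl fun z _ => by ring
    rw [this, m1, m3]
    apply mul_left_cancel₀ hn0
    linear_combination ((n : ℝ) + 2) * m4 - 2 * n * m2 + (2 * n + 6) * hN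
  rw [← Finset.add_sum_erase _ _ hx, real_inner_self_eq_norm_sq, hx1] at hsum
  have h0 : ∑ z ∈ Y.erase x, (((n : ℝ) + 2) * ⟪x, z⟫ ^ 2 + 2 * ⟪x, z⟫ - 1) ^ 2 = 0 := by
    linear_combination hsum
  have := (Finset.sum_eq_zero_iff_of_nonneg fun z _ => sq_nonneg _).1 h0 y
    (Finset.mem_erase.2 ⟨hxy, hy⟩)
  exact pow_eq_zero_iff two_ne_zero |>.1 this

lemma inner_eq_or {n : ℕ} (hn : 3 ≤ n) {Y : Finset (Euc n)} (hY : IsSphericalDesign n 4 Y)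
    (hN : (Y.card : ℝ) = n * (n + 3) / 2) {s : ℝ} (hs : s ^ 2 = n + 3) (hs1 : 1 < s)
    {x y : Euc n} (hx : x ∈ Y) (hy : y ∈ Y) (hxy : y ≠ x) :
    ⟪x, y⟫ = 1 / (s + 1) ∨ ⟪x, y⟫ = -1 / (s - 1) := by
  have h := inner_root hn hY hN hx hy hxy
  have h' : ((s + 1) * ⟪x, y⟫ - 1) * ((s - 1) * ⟪x, y⟫ + 1) = 0 := by
    linear_combination h + ⟪x, y⟫ ^ 2 * hs
  rcases mul_eq_zero.1 h' with h' | h'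
  · left; rw [eq_div_iff (by linarith)]; linarith
  · right; rw [eq_div_iff (by linarith)]; linarith

/-- The 0-1 matrix recording which pairs of points of `Y` have inner product `1 / (s + 1)`. -/
def adj {n : ℕ} (Y : Finset (Euc n)) (s : ℝ) : Matrix Y Y ℤ :=
  fun x y => if ⟪(x : Euc n), (y : Euc n)⟫ = 1 / (s + 1) then 1 else 0

/-- The Gram matrix is an affine combination of `adj`, the identity and the all-ones matrix,
written with denominators cleared. -/
lemma gram_eq {n : ℕ} (hn : 3 ≤ n) {Y : Finset (Euc n)} (hY : IsSphericalDesign n 4 Y)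
    (hN : (Y.card : ℝ) = n * (n + 3) / 2) {s : ℝ} (hs : s ^ 2 = n + 3) (hs1 : 1 < s) (x y : Y) :
    (s ^ 2 - 1) * ⟪(x : Euc n), (y : Euc n)⟫
      = -(s + 1) + 2 * s * adj Y s x y + (s ^ 2 + s) * if y = x then 1 else 0 := by
  have hp : s + 1 ≠ 0 := by linarith
  have hm : s - 1 ≠ 0 := by linarith
  by_cases hxy : y = x
  · subst hxy
    have hne : (1 : ℝ) ≠ 1 / (s + 1) := by
      rw [ne_eq, eq_div_iff hp]; intro h; linarith
    simp only [adj, real_inner_self_eq_norm_sq, norm_eq_one_of_mem hY y.2, one_pow, if_neg hne]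
    simp
    ring
  · have hxy' : (y : Euc n) ≠ x := fun h => hxy (Subtype.ext h)
    rcases inner_eq_or hn hY hN hs hs1 x.2 y.2 hxy' with h | h
    · simp only [adj, h, if_true, hxy, if_false]
      field_simp
      push_cast
      ring
    · have hne : (-1 / (s - 1) : ℝ) ≠ 1 / (s + 1) := by
        rw [ne_eq, div_eq_div_iff hm hp]; intro h; linarith
      simp only [adj, h, if_neg hne, hxy, if_false]
      field_simp
      push_cast
      ring

/-! ### Integrality and parity of `s` -/

/-- Since `∑ z ∈ Y, z = 0`, a row sum of `adj` satisfies a linear equation that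
exhibits `s` as a quotient of integers. -/
lemma isSquare_add_three {n : ℕ} (hn : 3 ≤ n) {Y : Finset (Euc n)} (hY : IsSphericalDesign n 4 Y)
    (hN : (Y.card : ℝ) = n * (n + 3) / 2) : IsSquare (n + 3) := by
  by_contra hsq
  have hirr : Irrational √((n + 3 : ℕ) : ℝ) := irrational_sqrt_natCast_iff.2 hsq
  set s := √((n + 3 : ℕ) : ℝ) with hsdef
  have hn' : (3 : ℝ) ≤ n := by exact_mod_cast hn
  have hs : s ^ 2 = n + 3 := by rw [hsdef, Real.sq_sqrt (by positivity)]; push_cast; ring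
  have hs1 : 1 < s := by
    have : 0 ≤ s := Real.sqrt_nonneg _
    nlinarith
  obtain ⟨x, hx⟩ := hY.1
  have h1 := powSum_odd hY (k := 1) (by norm_num) (by decide) x
  have hsum : ∑ y : Y, (s ^ 2 - 1) * ⟪x, (y : Euc n)⟫ = 0 := by
    rw [← Finset.mul_sum, Finset.sum_coe_sort Y (fun y => ⟪x, y⟫)]
    simp only [powSum, pow_one] at h1
    rw [h1, mul_zero]
  rw [Finset.sum_congr rfl fun y _ => gram_eq hn hY hN hs hs1 ⟨x, hx⟩ y] at hsum
  simp only [Finset.sum_add_distrib, ← Finset.mul_sum, Finset.sum_ite_eq', Finset.mem_univ,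
    if_true, Finset.sum_const, Finset.card_univ, Fintype.card_coe, nsmul_eq_mul] at hsum
  rw [← Int.cast_sum] at hsum
  set a : ℤ := ∑ y : Y, adj Y s ⟨x, hx⟩ y
  have hrel : s * ((2 * a - Y.card + 1 : ℤ) : ℝ) = ((Y.card : ℤ) - n - 3 : ℤ) := by
    push_cast
    linear_combination hsum - hs
  have hne : (((Y.card : ℤ) - n - 3 : ℤ) : ℝ) ≠ 0 := by
    push_cast
    rw [hN]
    nlinarith
  have hne' : (2 * a - Y.card + 1 : ℤ) ≠ 0 := by
    rintro h
    rw [h] at hrel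
    exact hne (by simpa using hrel.symm)
  exact (hirr.mul_intCast hne').ne_int _ hrel

/-- The Gram matrix has a nonzero kernel vector with zero coordinate sum because `n + 1 < |Y|`;
by `gram_eq` it is an eigenvector of `adj`. -/
lemma exists_eigenvector {n : ℕ} (hn : 3 ≤ n) {Y : Finset (Euc n)} (hY : IsSphericalDesign n 4 Y)
    (hN : (Y.card : ℝ) = n * (n + 3) / 2) {s : ℝ} (hs : s ^ 2 = n + 3) (hs1 : 1 < s) :
    ∃ v : Y → ℝ, v ≠ 0 ∧ ((adj Y s).map (Int.castRingHom ℝ)).mulVec v = (-(s + 1) / 2) • v := by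
  have hn' : (3 : ℝ) ≤ n := by exact_mod_cast hn
  let F : (Y → ℝ) →ₗ[ℝ] Euc n × ℝ :=
    (∑ y : Y, (LinearMap.proj y).smulRight (y : Euc n)).prod (∑ y : Y, LinearMap.proj y)
  have hlt : Module.finrank ℝ (Euc n × ℝ) < Module.finrank ℝ (Y → ℝ) := by
    simp only [Module.finrank_prod, finrank_euclideanSpace, Fintype.card_fin, Module.finrank_self,
      Module.finrank_fintype_fun_eq_card, Fintype.card_coe]
    have : ((n + 1 : ℕ) : ℝ) < Y.card := by rw [hN]; push_cast; nlinarith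
    exact_mod_cast this
  obtain ⟨v, hv, hv0⟩ := Submodule.exists_mem_ne_zero_of_ne_bot (LinearMap.ker_ne_bot_of_finrank_lt
    (f := F) hlt)
  refine ⟨v, hv0, ?_⟩
  have hF : (∑ y : Y, v y • (y : Euc n)) = 0 ∧ ∑ y : Y, v y = 0 := by
    simpa [F, Prod.ext_iff] using hv
  ext x
  have h0 : ∑ y : Y, v y * ((s ^ 2 - 1) * ⟪(x : Euc n), (y : Euc n)⟫) = 0 := by
    have : ⟪(x : Euc n), ∑ y : Y, v y • (y : Euc n)⟫ = 0 := by rw [hF.1, inner_zero_right]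
    simp only [inner_sum, inner_smul_right] at this
    calc _ = (s ^ 2 - 1) * ∑ y : Y, v y * ⟪(x : Euc n), (y : Euc n)⟫ := by
          rw [Finset.mul_sum]
          exact Finset.sum_congr rfl fun y _ => by ring
      _ = 0 := by rw [this, mul_zero]
  have h1 : ∑ y : Y, v y * ((s ^ 2 - 1) * ⟪(x : Euc n), (y : Euc n)⟫)
      = -(s + 1) * ∑ y : Y, v y + 2 * s * ∑ y : Y, adj Y s x y * v y
        + (s ^ 2 + s) * ∑ y : Y, if y = x then v y else 0 := by
    simp only [Finset.mul_sum, ← Finset.sum_add_distrib]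
    refine Finset.sum_congr rfl fun y _ => ?_
    rw [gram_eq hn hY hN hs hs1 x y]
    split_ifs <;> ring
  rw [h0, hF.2, Finset.sum_ite_eq', if_pos (Finset.mem_univ _)] at h1
  have h2 : ∑ y : Y, (adj Y s x y : ℝ) * v y = -(s + 1) / 2 * v x := by
    apply mul_left_cancel₀ (by linarith : (2 * s : ℝ) ≠ 0)
    linear_combination -h1
  simpa [Matrix.mulVec, dotProduct] using h2

/-- A rational eigenvalue of an integer matrix is a root of a monic integer polynomial. -/
lemma int_of_eigenvalue {ι : Type*} [Fintype ι] [DecidableEq ι] (A : Matrix ι ι ℤ) (q : ℚ)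
    (v : ι → ℝ) (hv : v ≠ 0) (h : (A.map (Int.castRingHom ℝ)).mulVec v = (q : ℝ) • v) :
    ∃ k : ℤ, (k : ℚ) = q := by
  have hdet : (Matrix.scalar ι (q : ℝ) - A.map (Int.castRingHom ℝ)).det = 0 := by
    refine Matrix.exists_mulVec_eq_zero_iff.1 ⟨v, hv, ?_⟩
    rw [Matrix.sub_mulVec, h]
    ext i
    simp [Matrix.scalar_apply]
  rw [← Matrix.eval_charpoly, Matrix.charpoly_map, Polynomial.eval_map] at hdet
  have hint : IsIntegral ℤ (algebraMap ℚ ℝ q) := ⟨A.charpoly, A.charpoly_monic, hdet⟩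
  rw [isIntegral_algebraMap_iff (algebraMap ℚ ℝ).injective] at hint
  exact IsIntegrallyClosed.isIntegral_iff.1 hint

end TightFour

open TightFour in

/-- Bannai–Damerell. If `X ⊆ S^{n-1}`, `n ≥ 3`, is a tight spherical
4-design (a spherical 4-design with `|X| = C(n+1, n-1) + C(n, n-1)`), then
`n = (2m+1)² - 3` for some positive integer `m`; in particular no tight spherical
4-design exists on `S^{n-1}` for `n ∈ {3, 4, 5, 7, 8}`. -/
theorem tight_spherical_four_design_dim (n : ℕ) (hn : 3 ≤ n)
    (Y : Finset (Euc n)) (hY : IsSphericalDesign n 4 Y)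
    (hcard : Y.card = (n + 1).choose (n - 1) + n.choose (n - 1)) :
    (∃ m : ℕ, 1 ≤ m ∧ n = (2 * m + 1) ^ 2 - 3) ∧
      n ≠ 3 ∧ n ≠ 4 ∧ n ≠ 5 ∧ n ≠ 7 ∧ n ≠ 8 := by
  have hN : (Y.card : ℝ) = n * (n + 3) / 2 := by
    obtain ⟨k, rfl⟩ : ∃ k, n = k + 1 := ⟨n - 1, by omega⟩
    rw [hcard, Nat.add_sub_cancel, Nat.choose_succ_self_right,
      show (k + 1 + 1).choose k = (k + 2).choose 2 from Nat.choose_symm_add (a := k) (b := 2),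
      Nat.cast_add, Nat.cast_choose_two]
    push_cast
    ring
  obtain ⟨s, hs⟩ := isSquare_add_three hn hY hN
  have hs3 : 3 ≤ s := by nlinarith
  have hsR : (s : ℝ) ^ 2 = n + 3 := by
    rw [sq]; exact_mod_cast hs.symm
  obtain ⟨v, hv, hAv⟩ := exists_eigenvector hn hY hN hsR (by exact_mod_cast (by omega : 1 < s))
  obtain ⟨k, hk⟩ := int_of_eigenvalue (adj Y s) (-((s : ℚ) + 1) / 2) v hv (by
    rw [hAv]; push_cast; rfl)
  have hk' : 2 * k = -((s : ℤ) + 1) := by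
    have : (2 * k : ℚ) = -((s : ℚ) + 1) := by rw [hk]; ring
    exact_mod_cast this
  obtain ⟨m, rfl⟩ : ∃ m, s = 2 * m + 1 := ⟨(s - 1) / 2, by omega⟩
  have hm : 1 ≤ m := by omega
  have hnm : n = (2 * m + 1) ^ 2 - 3 := by rw [sq]; omega
  refine ⟨⟨m, hm, hnm⟩, ?_⟩
  -- The value is `6` for `m = 1` and at least `22` for `m ≥ 2`.
  have : m = 1 ∨ 25 ≤ (2 * m + 1) * (2 * m + 1) := by
    rcases hm.eq_or_lt with h | h
    · exact Or.inl h.symm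
    · exact Or.inr (by nlinarith)
  rcases this with rfl | h <;> omega

end
end
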